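/- arXiv:2010.00653 — 4 statements merged into one kernel-verified Lean document; each statement's English description precedes it below -/
import Mathlib

section
/- Let K be an algebraically closed field and n >= 1. If r and s are symmetric rank tables and min(r,s) denotes the rank table with min(r,s)(i,j) := min(r(i,j), s(i,j)), then J^ss_{min(r,s)} = J^ss_r + J^ss_s as ideals of R_n. -/
namespace Paper

/-!
We model a permutation of the positive integers `{1, 2, 3, ...}` as an `Equiv.Perm ℕ`
that fixes `0`; all notions below refer only to positive inputs.
-/

/-- The rank `r_w(i,j) = #{a ∈ [i] : w(a) ∈ [j]}` of the `i × j` partial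
permutation matrix of `w`, where `[k] = {1, ..., k}`. -/
def rnk (w : Equiv.Perm ℕ) (i j : ℕ) : ℕ :=
  ((Finset.Icc 1 i).filter fun a => w a ∈ Finset.Icc 1 j).card

/-- Right descent set `Des_R(w) = {i ≥ 1 : w(i) > w(i+1)}`. -/
def DesR (w : Equiv.Perm ℕ) : Set ℕ := {i | 1 ≤ i ∧ w (i + 1) < w i}

/-- Left descent set `Des_L(w) = Des_R(w⁻¹)`. -/
def DesL (w : Equiv.Perm ℕ) : Set ℕ := DesR w⁻¹

/-- `S_∞`: permutations of the positive integers fixing all but finitely many points. -/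
def SInfty : Set (Equiv.Perm ℕ) :=
  {w | w 0 = 0 ∧ Set.Finite {i : ℕ | w i ≠ i}}

/-- `S^{m,n}_∞ = {w ∈ S_∞ : Des_R(w) ⊆ [m], Des_L(w) ⊆ [n]}`. -/
def SmnInfty (m n : ℕ) : Set (Equiv.Perm ℕ) :=
  {w | w ∈ SInfty ∧ DesR w ⊆ Set.Icc 1 m ∧ DesL w ⊆ Set.Icc 1 n}

/-- The Rothe diagram `D(w) = {(i,j) : 0 < j < w(i), 0 < i < w⁻¹(j)}`. -/
def Rothe (w : Equiv.Perm ℕ) : Set (ℕ × ℕ) :=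
  {p | 0 < p.2 ∧ p.2 < w p.1 ∧ 0 < p.1 ∧ p.1 < w⁻¹ p.2}

/-- The function `1_FPF`, sending `i ↦ i - (-1)^i` on positive integers (it fixes `0`). -/
def oneFPF : ℕ → ℕ := fun i => if i % 2 = 1 then i + 1 else i - 1

/-- `I^FPF_∞`: fixed-point-free involutions of the positive integers agreeing with
`1_FPF` at all sufficiently large inputs. -/
def IFPFInfty : Set (Equiv.Perm ℕ) :=
  {z | z 0 = 0 ∧ (∀ i, 1 ≤ i → z i ≠ i) ∧ z * z = 1 ∧ ∃ N, ∀ i, N ≤ i → z i = oneFPF i}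

/-- The skew-symmetric Rothe diagram `D^ss(z) = {(i,j) : 0 < j < z(i), j < i < z(j)}`. -/
def Dss (z : Equiv.Perm ℕ) : Set (ℕ × ℕ) :=
  {p | 0 < p.2 ∧ p.2 < z p.1 ∧ p.2 < p.1 ∧ p.1 < z p.2}

/-- `FPF_n(I_n) = {z ∈ I^FPF_∞ : D^ss(z) ⊆ [n] × [n]}`. -/
def FPFIn (n : ℕ) : Set (Equiv.Perm ℕ) :=
  {z | z ∈ IFPFInfty ∧ Dss z ⊆ Set.Icc 1 n ×ˢ Set.Icc 1 n}

/-- `ℓ_fpf(z) = |D^ss(z)|`. -/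
noncomputable def ellFpf (z : Equiv.Perm ℕ) : ℕ := (Dss z).ncard

/-- Bruhat order on `I^FPF_∞`: reflexive-transitive closure of `z < (i,j) z (i,j)`
whenever `i < j` and `ℓ_fpf` goes up by exactly one. -/
def fpfBruhatLe (z y : Equiv.Perm ℕ) : Prop :=
  Relation.ReflTransGen
    (fun a b => ∃ i j : ℕ, 1 ≤ i ∧ i < j ∧
      b = Equiv.swap i j * a * Equiv.swap i j ∧ ellFpf b = ellFpf a + 1) z y

/-- `i` is a visible descent of `z` if `i ≥ 1` and `z(i+1) < min(i, z(i))`. -/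
def visibleDescent (z : Equiv.Perm ℕ) (i : ℕ) : Prop :=
  1 ≤ i ∧ z (i + 1) < min i (z i)

/-- `Ψ(z, p) = {(p,r) z (p,r) : r > p, ℓ_fpf((p,r) z (p,r)) = ℓ_fpf(z) + 1}`. -/
def PsiSet (z : Equiv.Perm ℕ) (p : ℕ) : Set (Equiv.Perm ℕ) :=
  {y | ∃ r : ℕ, p < r ∧ y = Equiv.swap p r * z * Equiv.swap p r ∧ ellFpf y = ellFpf z + 1}

/-- The dominant component `dom(z) = {(i,j) : i, j ≥ 1, r_z(i,j) = 0}`. -/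
def domSet (z : Equiv.Perm ℕ) : Set (ℕ × ℕ) :=
  {p | 1 ≤ p.1 ∧ 1 ≤ p.2 ∧ rnk z p.1 p.2 = 0}

/-- `(p, q)` is an outer corner of `dom(z)`. -/
def IsOuterCorner (z : Equiv.Perm ℕ) (p q : ℕ) : Prop :=
  1 ≤ p ∧ 1 ≤ q ∧ (p, q) ∉ domSet z ∧
    (p = 1 ∨ (p - 1, q) ∈ domSet z) ∧ (q = 1 ∨ (p, q - 1) ∈ domSet z)

/-- `I_n`: involutions in `S_∞` fixing every `i > n`. -/
def InvolIn (n : ℕ) : Set (Equiv.Perm ℕ) :=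
  {w | w 0 = 0 ∧ w * w = 1 ∧ ∀ i, n < i → w i = i}

/-- The fixed points of `z` lying in `[n]`. -/
def fixedPtsIn (n : ℕ) (z : Equiv.Perm ℕ) : Finset ℕ :=
  (Finset.Icc 1 n).filter fun i => z i = i

/-- The function swapping `m + 2t - 1` and `m + 2t` for every `t ≥ 1`, fixing all other points. -/
def tailSwapFun (m : ℕ) : ℕ → ℕ := fun i =>
  if i ≤ m then i else if (i - m) % 2 = 1 then i + 1 else i - 1

theorem tailSwapFun_involutive (m : ℕ) : Function.Involutive (tailSwapFun m) := by
  intro i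
  unfold tailSwapFun
  split_ifs <;> omega

/-- The involution swapping `m + 2t - 1` and `m + 2t` for every `t ≥ 1`. -/
def tailSwap (m : ℕ) : Equiv.Perm ℕ :=
  Function.Involutive.toPerm _ (tailSwapFun_involutive m)

/-- The fixed-point-free standardization `FPF_n(z) = z ⋅ (i_1,n+1)⋯(i_k,n+k) ⋅ c`,
where `i_1 < ⋯ < i_k` are the fixed points of `z` in `[n]` and `c` swaps
`n+k+2t-1, n+k+2t` for all `t ≥ 1`. -/
noncomputable def fpfStd (n : ℕ) (z : Equiv.Perm ℕ) : Equiv.Perm ℕ :=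
  z *
    (List.ofFn fun t : Fin (fixedPtsIn n z).card =>
      Equiv.swap ((fixedPtsIn n z).orderEmbOfFin rfl t) (n + (t : ℕ) + 1)).prod *
    tailSwap (n + (fixedPtsIn n z).card)

/-- `Mat^ss_n(K)`: skew-symmetric `n × n` matrices (transpose is the negative, zero diagonal).
Row/column index `a : Fin n` corresponds to the (1-indexed) row/column `a + 1`. -/
def MatSS (K : Type*) [CommRing K] (n : ℕ) : Set (Matrix (Fin n) (Fin n) K) :=
  {A | A.transpose = -A ∧ ∀ i, A i i = 0}

/-- The skew-symmetric matrix Schubert variety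
`X^ss_z = {A ∈ Mat^ss_n : rank A_{[i][j]} ≤ r_z(i,j) for all i, j ∈ [n]}`. -/
noncomputable def Xss (K : Type*) [Field K] (n : ℕ) (z : Equiv.Perm ℕ) :
    Set (Matrix (Fin n) (Fin n) K) :=
  {A | A ∈ MatSS K n ∧ ∀ (i j : ℕ) (hi : i ≤ n) (hj : j ≤ n), 1 ≤ i → 1 ≤ j →
    (A.submatrix (Fin.castLE hi) (Fin.castLE hj)).rank ≤ rnk z i j}

/-- `#{(i,j) : i > j, j < z(i), i < z(j)}` for a permutation of `Fin N`
(the `0`-indexed version of `ℓ_fpf`). -/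
def ellFpfFin {N : ℕ} (z : Equiv.Perm (Fin N)) : ℕ :=
  (Finset.univ.filter fun p : Fin N × Fin N => p.2 < p.1 ∧ p.2 < z p.1 ∧ p.1 < z p.2).card

/-- The Pfaffian of an `N × N` matrix:
`pf(A) = ∑_{z fpf involution of [N]} (-1)^{ℓ_fpf(z)} ∏_{z(i) < i} A_{z(i), i}`.
(The sum is empty, hence `0`, when `N` is odd.) -/
noncomputable def Pfaffian {R : Type*} [CommRing R] {N : ℕ} (A : Matrix (Fin N) (Fin N) R) : R :=
  ∑ z ∈ Finset.univ.filter (fun z : Equiv.Perm (Fin N) => (∀ i, z i ≠ i) ∧ ∀ i, z (z i) = i),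
    (-1 : R) ^ ellFpfFin z * ∏ i ∈ Finset.univ.filter (fun i : Fin N => z i < i), A (z i) i

/-- Index set for the variables `u_{ij}`, `n ≥ i > j ≥ 1`, of the coordinate ring
`R_n = K[Mat^ss_n]`; the variable `⟨(a, b), _⟩` is `u_{a+1, b+1}`. -/
abbrev SSVar (n : ℕ) : Type := {p : Fin n × Fin n // p.2 < p.1}

/-- The generic skew-symmetric matrix `U^ss` over `R_n`. -/
noncomputable def Uss (K : Type*) [CommRing K] (n : ℕ) :
    Matrix (Fin n) (Fin n) (MvPolynomial (SSVar n) K) :=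
  Matrix.of fun i j =>
    if h : j < i then MvPolynomial.X ⟨(i, j), h⟩
    else if h' : i < j then -MvPolynomial.X ⟨(j, i), h'⟩
    else 0

/-- The ideal of polynomials vanishing on a set `X`, where a point `A` is evaluated
via `ev A : σ → K`. -/
noncomputable def vanishingIdeal {K : Type*} [CommRing K] {σ M : Type*}
    (X : Set M) (ev : M → σ → K) : Ideal (MvPolynomial σ K) where
  carrier := {f | ∀ A ∈ X, MvPolynomial.eval (ev A) f = 0}
  zero_mem' := by simp
  add_mem' := by
    intro f g hf hg
    simp only [Set.mem_setOf_eq] at *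
    intro A hA
    rw [map_add, hf A hA, hg A hA, add_zero]
  smul_mem' := by
    intro c f hf
    simp only [Set.mem_setOf_eq] at *
    intro A hA
    rw [smul_eq_mul, map_mul, hf A hA, mul_zero]

/-- `I(X^ss_z) ⊆ R_n`, where `u_{ij}` is evaluated at `A` as `A_{ij}`. -/
noncomputable def IXss (K : Type*) [Field K] (n : ℕ) (z : Equiv.Perm ℕ) :
    Ideal (MvPolynomial (SSVar n) K) :=
  vanishingIdeal (Xss K n z) fun A v => A v.1.1 v.1.2

/-- `pf(U^ss_{RR})` for a finite row/column set `R` (listed in increasing order). -/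
noncomputable def pfUss (K : Type*) [CommRing K] {n : ℕ} (R : Finset (Fin n)) :
    MvPolynomial (SSVar n) K :=
  Pfaffian ((Uss K n).submatrix (fun s => R.orderEmbOfFin rfl s) fun t => R.orderEmbOfFin rfl t)

/-- The ideal `I^ss_z`, generated by the Pfaffians `pf(U^ss_{RR})` over all nonempty
even-size `R ⊆ [n]` such that `R ⊆ [i]` and `|R ∩ [j]| > r_z(i,j)` for some `i ≥ j`. -/
noncomputable def IssIdeal (K : Type*) [Field K] (n : ℕ) (z : Equiv.Perm ℕ) :
    Ideal (MvPolynomial (SSVar n) K) :=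
  Ideal.span {f : MvPolynomial (SSVar n) K | ∃ R : Finset (Fin n),
    R.Nonempty ∧ Even R.card ∧
    (∃ i j : ℕ, 1 ≤ j ∧ j ≤ i ∧ i ≤ n ∧ (∀ a ∈ R, (a : ℕ) + 1 ≤ i) ∧
      rnk z i j < (R.filter fun a : Fin n => (a : ℕ) + 1 ≤ j).card) ∧
    f = pfUss K R}

/-- The square-free monomial `u^ss_{AB}`: zero if `A ⊙ B` meets the diagonal, and otherwise
the product of the variables `u_{ij}` over the pairs `i > j` with `(i,j)` or `(j,i)` in
`A ⊙ B = {(a_0, b_r), (a_1, b_{r-1}), ..., (a_r, b_0)}`. -/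
noncomputable def ussMon (K : Type*) [CommRing K] {n : ℕ} (A B : Finset (Fin n)) :
    MvPolynomial (SSVar n) K :=
  if h : A.card = B.card then
    if ∃ t : Fin A.card, (A.orderEmbOfFin rfl t : Fin n) = B.orderEmbOfFin h.symm t.rev then 0
    else
      ∏ v ∈ Finset.univ.filter (fun v : SSVar n => ∃ t : Fin A.card,
          (A.orderEmbOfFin rfl t = v.1.1 ∧ B.orderEmbOfFin h.symm t.rev = v.1.2) ∨
          (A.orderEmbOfFin rfl t = v.1.2 ∧ B.orderEmbOfFin h.symm t.rev = v.1.1)),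
        MvPolynomial.X v
  else 0

/-- The monomial ideal `J^ss_r` of a symmetric rank table `r`, generated by the monomials
`u^ss_{AB}` with `A ⊆ [i]`, `B ⊆ [j]`, `|A| = |B| = r(i,j) + 1` for some `n ≥ i ≥ j ≥ 1`. -/
noncomputable def JssIdealOfTable (K : Type*) [CommRing K] (n : ℕ) (r : ℕ → ℕ → ℕ) :
    Ideal (MvPolynomial (SSVar n) K) :=
  Ideal.span {g : MvPolynomial (SSVar n) K | ∃ (i j : ℕ) (A B : Finset (Fin n)),
    1 ≤ j ∧ j ≤ i ∧ i ≤ n ∧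
    (∀ a ∈ A, (a : ℕ) + 1 ≤ i) ∧ (∀ b ∈ B, (b : ℕ) + 1 ≤ j) ∧
    A.card = r i j + 1 ∧ B.card = r i j + 1 ∧ g = ussMon K A B}

/-- `J^ss_z = J^ss_{r_z}`. -/
noncomputable def JssIdeal (K : Type*) [CommRing K] (n : ℕ) (z : Equiv.Perm ℕ) :
    Ideal (MvPolynomial (SSVar n) K) :=
  JssIdealOfTable K n (rnk z)

/-- Total degree of a monomial (exponent vector). -/
def totalDeg {σ : Type*} (m : σ →₀ ℕ) : ℕ := m.sum fun _ e => e

/-- The lexicographic order on the variables `u_{ij}` by the pair `(i, j)`. -/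
def varLT {n : ℕ} (v w : SSVar n) : Prop :=
  v.1.1 < w.1.1 ∨ (v.1.1 = w.1.1 ∧ v.1.2 < w.1.2)

/-- The (graded) reverse lexicographic term order on monomials of `R_n`:
`m₁ < m₂` iff `deg m₁ < deg m₂`, or the degrees agree and the lexicographically largest
variable with different exponents has strictly larger exponent in `m₁`. -/
def revlexLT {n : ℕ} (m₁ m₂ : SSVar n →₀ ℕ) : Prop :=
  totalDeg m₁ < totalDeg m₂ ∨
    (totalDeg m₁ = totalDeg m₂ ∧ ∃ v, m₂ v < m₁ v ∧ ∀ w, varLT v w → m₁ w = m₂ w)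

/-- The initial ideal of `I` with respect to a strict term order `lt`: the ideal
generated by the leading monomials `init(f)` of the nonzero `f ∈ I`. -/
noncomputable def initIdeal {K : Type*} [CommRing K] {σ : Type*}
    (lt : (σ →₀ ℕ) → (σ →₀ ℕ) → Prop) (I : Ideal (MvPolynomial σ K)) :
    Ideal (MvPolynomial σ K) :=
  Ideal.span {g : MvPolynomial σ K | ∃ f ∈ I, f ≠ 0 ∧ ∃ m : σ →₀ ℕ, m ∈ f.support ∧
    (∀ m' ∈ f.support, m' ≠ m → lt m' m) ∧ g = MvPolynomial.monomial m (1 : K)}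

/-- A term order on the monomials of a polynomial ring: a linear order in which `1` is
the unique minimum and multiplication by a fixed monomial preserves order. -/
structure TermOrder (σ : Type*) where
  le : (σ →₀ ℕ) → (σ →₀ ℕ) → Prop
  trans : ∀ a b c, le a b → le b c → le a c
  antisymm : ∀ a b, le a b → le b a → a = b
  total : ∀ a b, le a b ∨ le b a
  zero_le : ∀ a, le 0 a
  add_le_add_right : ∀ a b c, le a b → le (a + c) (b + c)

/-- The initial ideal of `I` with respect to a term order `τ`. -/
noncomputable def initIdealLe {K : Type*} [CommRing K] {σ : Type*}
    (τ : TermOrder σ) (I : Ideal (MvPolynomial σ K)) : Ideal (MvPolynomial σ K) :=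
  Ideal.span {g : MvPolynomial σ K | ∃ f ∈ I, f ≠ 0 ∧ ∃ m : σ →₀ ℕ, m ∈ f.support ∧
    (∀ m' ∈ f.support, τ.le m' m) ∧ g = MvPolynomial.monomial m (1 : K)}

/-- An ideal is homogeneous (w.r.t. total degree) iff it contains all homogeneous
components of its elements. -/
def IsHomogIdeal {K : Type*} [CommSemiring K] {σ : Type*}
    (I : Ideal (MvPolynomial σ K)) : Prop :=
  ∀ f ∈ I, ∀ d : ℕ, MvPolynomial.homogeneousComponent d f ∈ I

/-- The reading order on boxes: rows top to bottom, each row right to left. -/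
def pdRel (p q : ℕ × ℕ) : Prop := p.1 < q.1 ∨ (p.1 = q.1 ∧ q.2 ≤ p.2)

instance : DecidableRel pdRel := fun p q => by unfold pdRel; infer_instance

instance : IsTrans (ℕ × ℕ) pdRel :=
  ⟨fun a b c hab hbc => by unfold pdRel at *; omega⟩

instance : IsAntisymm (ℕ × ℕ) pdRel :=
  ⟨fun a b hab hba => by
    unfold pdRel at hab hba
    exact Prod.ext_iff.mpr ⟨by omega, by omega⟩⟩

instance : IsTotal (ℕ × ℕ) pdRel :=
  ⟨fun a b => by unfold pdRel; omega⟩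

/-- The pipe dream reading word of a finite set `D` of boxes: the letters `i + j - 1`
over `(i, j) ∈ D`, in the order making `(i, -j)` increase lexicographically. -/
def pdWord (D : Finset (ℕ × ℕ)) : List ℕ :=
  (D.sort pdRel).map fun p => p.1 + p.2 - 1

/-- The product `s_{i_1} s_{i_2} ⋯ s_{i_l}` of simple transpositions. -/
def wordProd (l : List ℕ) : Equiv.Perm ℕ :=
  (l.map fun i => Equiv.swap i (i + 1)).prod

/-- `l` is a reduced word for `w`: a minimal-length word of positive letters whose
product of simple transpositions is `w`. -/
def IsReducedWordOf (w : Equiv.Perm ℕ) (l : List ℕ) : Prop :=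
  (∀ a ∈ l, 1 ≤ a) ∧ wordProd l = w ∧
    ∀ l' : List ℕ, (∀ a ∈ l', 1 ≤ a) → wordProd l' = w → l.length ≤ l'.length

/-- The set `RP(w)` of reduced pipe dreams for `w`. -/
def RP (w : Equiv.Perm ℕ) : Set (Finset (ℕ × ℕ)) :=
  {D | (∀ p ∈ D, 1 ≤ p.1 ∧ 1 ≤ p.2) ∧ IsReducedWordOf w (pdWord D)}

/-- `I^FPF_m`: involutions in `S_∞` that are fixed-point-free on `[m]` and fix
all `i > m`. -/
def IFPFm (m : ℕ) : Set (Equiv.Perm ℕ) :=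
  {y | y 0 = 0 ∧ y * y = 1 ∧ (∀ i, 1 ≤ i → i ≤ m → y i ≠ i) ∧ ∀ i, m < i → y i = i}

/-- `z = FPF_m(y)`: `z` agrees with `y` on `[m]` and swaps `m + 2k - 1, m + 2k`
for all `k ≥ 1`. -/
def IsFPFStdOf (m : ℕ) (y z : Equiv.Perm ℕ) : Prop :=
  (∀ i, i ≤ m → z i = y i) ∧
    ∀ k : ℕ, z (m + 2 * k + 1) = m + 2 * k + 2 ∧ z (m + 2 * k + 2) = m + 2 * k + 1

/-- The set `FP(z)` of fpf-involution pipe dreams for `z ∈ I^FPF_∞`. -/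
def FP (z : Equiv.Perm ℕ) : Set (Finset (ℕ × ℕ)) :=
  {E | ∃ (m : ℕ) (y : Equiv.Perm ℕ) (D : Finset (ℕ × ℕ)), Even m ∧ y ∈ IFPFm m ∧
    IsFPFStdOf m y z ∧ D ∈ RP y ∧ D.image Prod.swap = D ∧
    E = D.filter fun p => p.2 < p.1}

/-- The minor `det(U_{AB})` of the generic `m × n` matrix `U`, with rows `A` and
columns `B` listed in increasing order. -/
noncomputable def genMinor (K : Type*) [CommRing K] {m n : ℕ}
    (A : Finset (Fin m)) (B : Finset (Fin n)) (h : A.card = B.card) :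
    MvPolynomial (Fin m × Fin n) K :=
  (Matrix.of fun s t : Fin A.card =>
    (MvPolynomial.X (A.orderEmbOfFin rfl s, B.orderEmbOfFin h.symm t) :
      MvPolynomial (Fin m × Fin n) K)).det

/-- The antidiagonal monomial `u_{AB} = ∏_{(a,b) ∈ A ⊙ B} u_{ab}`. -/
noncomputable def genMon (K : Type*) [CommRing K] {m n : ℕ}
    (A : Finset (Fin m)) (B : Finset (Fin n)) (h : A.card = B.card) :
    MvPolynomial (Fin m × Fin n) K :=
  ∏ t : Fin A.card, MvPolynomial.X (A.orderEmbOfFin rfl t, B.orderEmbOfFin h.symm t.rev)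

/-- The exponent vector of the antidiagonal monomial `u_{AB}`. -/
noncomputable def antidiagExp {m n : ℕ} (A : Finset (Fin m)) (B : Finset (Fin n))
    (h : A.card = B.card) : (Fin m × Fin n) →₀ ℕ :=
  ∑ t : Fin A.card, Finsupp.single (A.orderEmbOfFin rfl t, B.orderEmbOfFin h.symm t.rev) 1

/-- The ideal `I_w`, generated by the minors `det(U_{AB})` with `A ⊆ [i]`, `B ⊆ [j]`,
`|A| = |B| = r_w(i,j) + 1` for some `(i,j) ∈ [m] × [n]`. -/
noncomputable def IwIdeal (K : Type*) [Field K] (m n : ℕ) (w : Equiv.Perm ℕ) :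
    Ideal (MvPolynomial (Fin m × Fin n) K) :=
  Ideal.span {g : MvPolynomial (Fin m × Fin n) K |
    ∃ (i j : ℕ) (A : Finset (Fin m)) (B : Finset (Fin n)) (h : A.card = B.card),
      1 ≤ i ∧ i ≤ m ∧ 1 ≤ j ∧ j ≤ n ∧ (∀ a ∈ A, (a : ℕ) + 1 ≤ i) ∧
      (∀ b ∈ B, (b : ℕ) + 1 ≤ j) ∧ A.card = rnk w i j + 1 ∧ g = genMinor K A B h}

/-- The monomial ideal `J_w`, generated by the monomials `u_{AB}` with `A ⊆ [i]`,
`B ⊆ [j]`, `|A| = |B| = r_w(i,j) + 1` for some `(i,j) ∈ [m] × [n]`. -/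
noncomputable def JwIdeal (K : Type*) [Field K] (m n : ℕ) (w : Equiv.Perm ℕ) :
    Ideal (MvPolynomial (Fin m × Fin n) K) :=
  Ideal.span {g : MvPolynomial (Fin m × Fin n) K |
    ∃ (i j : ℕ) (A : Finset (Fin m)) (B : Finset (Fin n)) (h : A.card = B.card),
      1 ≤ i ∧ i ≤ m ∧ 1 ≤ j ∧ j ≤ n ∧ (∀ a ∈ A, (a : ℕ) + 1 ≤ i) ∧
      (∀ b ∈ B, (b : ℕ) + 1 ≤ j) ∧ A.card = rnk w i j + 1 ∧ g = genMon K A B h}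

/-- The matrix Schubert variety
`X_w = {A ∈ Mat_{m×n} : rank A_{[i][j]} ≤ r_w(i,j) for all (i,j) ∈ [m] × [n]}`. -/
noncomputable def Xw (K : Type*) [Field K] (m n : ℕ) (w : Equiv.Perm ℕ) :
    Set (Matrix (Fin m) (Fin n) K) :=
  {A | ∀ (i j : ℕ) (hi : i ≤ m) (hj : j ≤ n), 1 ≤ i → 1 ≤ j →
    (A.submatrix (Fin.castLE hi) (Fin.castLE hj)).rank ≤ rnk w i j}

/-- `I(X_w)`: the ideal of polynomials vanishing on `X_w`. -/
noncomputable def IXw (K : Type*) [Field K] (m n : ℕ) (w : Equiv.Perm ℕ) :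
    Ideal (MvPolynomial (Fin m × Fin n) K) :=
  vanishingIdeal (Xw K m n w) fun A v => A v.1 v.2

/-- The variable `u_{pq}` (with `1 ≤ q < p ≤ n`) of `R_n`. -/
def ssvar {n : ℕ} (p q : ℕ) (hp : p ≤ n) (hq : 1 ≤ q) (hqp : q < p) : SSVar n :=
  ⟨(⟨p - 1, by omega⟩, ⟨q - 1, by omega⟩), Fin.mk_lt_mk.mpr (by omega)⟩

/-- Index set for the variables `u_{ij}`, `i > j ≥ 1`, over all positive integers. -/
abbrev PVar : Type := {p : ℕ × ℕ // 1 ≤ p.2 ∧ p.2 < p.1}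

/-- The generic skew-symmetric array `U^ss` over the positive integers:
`u_{xy}` if `x > y`, `-u_{yx}` if `x < y`, `0` if `x = y`. -/
noncomputable def UssP (K : Type*) [CommRing K] (x y : ℕ) : MvPolynomial PVar K :=
  if h : 1 ≤ y ∧ y < x then MvPolynomial.X ⟨(x, y), h⟩
  else if h' : 1 ≤ x ∧ x < y then -MvPolynomial.X ⟨(y, x), h'⟩
  else 0

/-- `pf(U^ss_{RR})` for a finite set `R` of positive integers. -/
noncomputable def pfUssP (K : Type*) [CommRing K] (R : Finset ℕ) : MvPolynomial PVar K :=
  Pfaffian (Matrix.of fun s t : Fin R.card =>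
    UssP K (R.orderEmbOfFin rfl s) (R.orderEmbOfFin rfl t))

/-- `g_{AB}`: the Pfaffian of the `(|B|+|A|) × (|B|+|A|)` skew-symmetric matrix whose
rows and columns are labeled by `B` (increasing) followed by `A` (increasing), with
entry `U^ss_{xy}` at a position labeled `(x, y)`, except that the entry is `0` when
both labels come from the `A`-block. -/
noncomputable def gAB (K : Type*) [CommRing K] (A B : Finset ℕ) : MvPolynomial PVar K :=
  Pfaffian ((Matrix.of fun p q : Fin B.card ⊕ Fin A.card =>
      match p, q with
      | Sum.inl s, Sum.inl t => UssP K (B.orderEmbOfFin rfl s) (B.orderEmbOfFin rfl t)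
      | Sum.inl s, Sum.inr t => UssP K (B.orderEmbOfFin rfl s) (A.orderEmbOfFin rfl t)
      | Sum.inr s, Sum.inl t => UssP K (A.orderEmbOfFin rfl s) (B.orderEmbOfFin rfl t)
      | Sum.inr _, Sum.inr _ => (0 : MvPolynomial PVar K)).submatrix
    finSumFinEquiv.symm finSumFinEquiv.symm)

/-- The exponent of the sign `⟨T, S⟩ = (-1)^{|S||T| + C(|S|,2) + ∑ of the (1-indexed)
positions in the increasing enumeration of `T` occupied by elements of `S`}`. -/
def setSgnExp (T S : Finset ℕ) : ℕ :=
  S.card * T.card + Nat.choose S.card 2 +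
    ∑ t : Fin T.card, if T.orderEmbOfFin rfl t ∈ S then (t : ℕ) + 1 else 0


theorem ussMon_eq_aux (K : Type*) [CommRing K] {n k : ℕ} (A B : Finset (Fin n))
    (hA : A.card = k) (hB : B.card = k) :
    ussMon K A B =
    if ∃ t : Fin k, (A.orderEmbOfFin hA t : Fin n) = B.orderEmbOfFin hB t.rev then 0
    else
      ∏ v ∈ Finset.univ.filter (fun v : SSVar n => ∃ t : Fin k,
          (A.orderEmbOfFin hA t = v.1.1 ∧ B.orderEmbOfFin hB t.rev = v.1.2) ∨
          (A.orderEmbOfFin hA t = v.1.2 ∧ B.orderEmbOfFin hB t.rev = v.1.1)),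
        MvPolynomial.X v := by
  subst hA
  unfold ussMon
  rw [dif_pos hB.symm]

theorem exists_sub_aux (K : Type*) [CommRing K] {n k m : ℕ} (hkm : k ≤ m) (A B : Finset (Fin n))
    (hA : A.card = m) (hB : B.card = m) :
    ∃ A' B' : Finset (Fin n), A' ⊆ A ∧ B' ⊆ B ∧ A'.card = k ∧ B'.card = k ∧
      ussMon K A' B' ∣ ussMon K A B := by
  have hf : StrictMono (fun t : Fin k => A.orderEmbOfFin hA (Fin.castLE hkm t)) := by
    intro a b h
    exact (A.orderEmbOfFin hA).strictMono (by simpa using h)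
  have hg : StrictMono (fun t : Fin k => B.orderEmbOfFin hB (Fin.castLE hkm t.rev).rev) := by
    intro a b h
    refine (B.orderEmbOfFin hB).strictMono ?_
    simp only [Fin.lt_def, Fin.val_rev, Fin.val_castLE] at h ⊢
    omega
  have hA' : (Finset.univ.image (fun t : Fin k => A.orderEmbOfFin hA (Fin.castLE hkm t))).card
      = k := by
    rw [Finset.card_image_of_injective _ hf.injective]; simp
  have hB' : (Finset.univ.image
      (fun t : Fin k => B.orderEmbOfFin hB (Fin.castLE hkm t.rev).rev)).card = k := by
    rw [Finset.card_image_of_injective _ hg.injective]; simp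
  have eA := Finset.orderEmbOfFin_unique hA'
    (fun x => Finset.mem_image_of_mem _ (Finset.mem_univ x)) hf
  have eB := Finset.orderEmbOfFin_unique hB'
    (fun x => Finset.mem_image_of_mem _ (Finset.mem_univ x)) hg
  refine ⟨_, _, ?_, ?_, hA', hB', ?_⟩
  · intro x hx
    obtain ⟨t, -, rfl⟩ := Finset.mem_image.1 hx
    exact Finset.orderEmbOfFin_mem _ _ _
  · intro x hx
    obtain ⟨t, -, rfl⟩ := Finset.mem_image.1 hx
    exact Finset.orderEmbOfFin_mem _ _ _
  · rw [ussMon_eq_aux K A B hA hB, ussMon_eq_aux K _ _ hA' hB', ← eA, ← eB]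
    simp only [Fin.rev_rev]
    by_cases h : ∃ t : Fin m, (A.orderEmbOfFin hA t : Fin n) = B.orderEmbOfFin hB t.rev
    · rw [if_pos h]; exact dvd_zero _
    · rw [if_neg h, if_neg (fun ⟨t, ht⟩ => h ⟨_, ht⟩)]
      apply Finset.prod_dvd_prod_of_subset
      intro v hv
      simp only [Finset.mem_filter, Finset.mem_univ, true_and] at hv ⊢
      obtain ⟨t, ht⟩ := hv
      exact ⟨_, ht⟩

theorem Jss_mono_aux (K : Type*) [CommRing K] (n : ℕ) (q r : ℕ → ℕ → ℕ)
    (h : ∀ i j, q i j ≤ r i j) : JssIdealOfTable K n r ≤ JssIdealOfTable K n q := by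
  unfold JssIdealOfTable
  rw [Ideal.span_le]
  rintro g ⟨i, j, A, B, hj, hji, hi, hAi, hBj, hA, hB, rfl⟩
  obtain ⟨A', B', hAA, hBB, hA', hB', hd⟩ :=
    exists_sub_aux K (Nat.succ_le_succ (h i j)) A B hA hB
  exact Ideal.mem_of_dvd _ hd (Ideal.subset_span ⟨i, j, A', B', hj, hji, hi,
    fun a ha => hAi a (hAA ha), fun b hb => hBj b (hBB hb), hA', hB', rfl⟩)

/-- For symmetric rank tables `r` and `s`,
`J^ss_{min(r,s)} = J^ss_r + J^ss_s` as ideals of `R_n`. -/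
theorem statement9 (K : Type*) [Field K] [IsAlgClosed K] (n : ℕ) (hn : 1 ≤ n)
    (r s : ℕ → ℕ → ℕ) (hr0 : ∀ i, r i 0 = 0) (hr0' : ∀ j, r 0 j = 0)
    (hrsym : ∀ i j, r i j = r j i)
    (hs0 : ∀ i, s i 0 = 0) (hs0' : ∀ j, s 0 j = 0) (hssym : ∀ i j, s i j = s j i) :
    JssIdealOfTable K n (fun i j => min (r i j) (s i j)) =
      JssIdealOfTable K n r + JssIdealOfTable K n s := by
  apply le_antisymm
  · conv_lhs => unfold JssIdealOfTable
    rw [Ideal.span_le]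
    rintro g ⟨i, j, A, B, hj, hji, hi, hAi, hBj, hA, hB, rfl⟩
    rcases min_choice (r i j) (s i j) with h | h
    · simp only [h] at hA hB
      exact (le_sup_left : _ ≤ JssIdealOfTable K n r ⊔ JssIdealOfTable K n s)
        (Ideal.subset_span ⟨i, j, A, B, hj, hji, hi, hAi, hBj, hA, hB, rfl⟩)
    · simp only [h] at hA hB
      exact (le_sup_right : _ ≤ JssIdealOfTable K n r ⊔ JssIdealOfTable K n s)
        (Ideal.subset_span ⟨i, j, A, B, hj, hji, hi, hAi, hBj, hA, hB, rfl⟩)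
  · exact sup_le (Jss_mono_aux K n _ _ fun i j => min_le_left _ _)
      (Jss_mono_aux K n _ _ fun i j => min_le_right _ _)

end Paper
end

section
/- Let K be a field, let m, n >= 1, and let M be a monomial in K[u_{ij} : (i,j) in [m] x [n]]. Then there exists w in S^{m,n}_infty such that r_M(i,j) = r_w(i,j) for all (i,j) in [m] x [n]. -/
namespace Paper

/-- Antidiagonal chains. -/
def IsCh {m n : ℕ} (C : Finset (Fin m × Fin n)) : Prop :=
  ∀ x ∈ C, ∀ y ∈ C, x ≠ y →
    (x.1.val < y.1.val ∧ y.2.val < x.2.val) ∨ (y.1.val < x.1.val ∧ x.2.val < y.2.val)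

open Classical in
/-- Admissible chains inside the `i × j` corner. -/
noncomputable def chs {m n : ℕ} (S : Finset (Fin m × Fin n)) (i j : ℕ) :
    Finset (Finset (Fin m × Fin n)) :=
  S.powerset.filter fun C => IsCh C ∧ ∀ x ∈ C, x.1.val < i ∧ x.2.val < j

/-- Longest chain length. -/
noncomputable def LL {m n : ℕ} (S : Finset (Fin m × Fin n)) (i j : ℕ) : ℕ :=
  (chs S i j).sup Finset.card

theorem mem_chs {m n : ℕ} {S : Finset (Fin m × Fin n)} {i j : ℕ} {C : Finset (Fin m × Fin n)} :
    C ∈ chs S i j ↔ C ⊆ S ∧ IsCh C ∧ ∀ x ∈ C, x.1.val < i ∧ x.2.val < j := by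
  simp [chs]

theorem card_le_LL {m n : ℕ} {S : Finset (Fin m × Fin n)} {i j : ℕ} {C : Finset (Fin m × Fin n)}
    (h : C ∈ chs S i j) : C.card ≤ LL S i j :=
  Finset.le_sup (f := Finset.card) h

theorem exists_LL {m n : ℕ} (S : Finset (Fin m × Fin n)) (i j : ℕ) :
    ∃ C ∈ chs S i j, C.card = LL S i j := by
  have hne : (chs S i j).Nonempty := ⟨∅, by rw [mem_chs]; simp [IsCh]⟩
  obtain ⟨C, hC, h⟩ := Finset.exists_mem_eq_sup _ hne Finset.card
  exact ⟨C, hC, h.symm⟩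

theorem IsCh.sub {m n : ℕ} {C D : Finset (Fin m × Fin n)} (h : IsCh C) (hD : D ⊆ C) : IsCh D :=
  fun x hx y hy hxy => h x (hD hx) y (hD hy) hxy

theorem LL_zero_left {m n : ℕ} (S : Finset (Fin m × Fin n)) (j : ℕ) : LL S 0 j = 0 := by
  obtain ⟨C, hC, h⟩ := exists_LL S 0 j
  rw [mem_chs] at hC
  rw [← h, Finset.card_eq_zero, Finset.eq_empty_iff_forall_notMem]
  intro x hx
  have := hC.2.2 x hx
  omega

theorem LL_zero_right {m n : ℕ} (S : Finset (Fin m × Fin n)) (i : ℕ) : LL S i 0 = 0 := by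
  obtain ⟨C, hC, h⟩ := exists_LL S i 0
  rw [mem_chs] at hC
  rw [← h, Finset.card_eq_zero, Finset.eq_empty_iff_forall_notMem]
  intro x hx
  have := hC.2.2 x hx
  omega

theorem LL_mono {m n : ℕ} (S : Finset (Fin m × Fin n)) {i j i' j' : ℕ} (hi : i ≤ i')
    (hj : j ≤ j') : LL S i j ≤ LL S i' j' := by
  obtain ⟨C, hC, h⟩ := exists_LL S i j
  rw [← h]
  apply card_le_LL
  rw [mem_chs] at *
  refine ⟨hC.1, hC.2.1, fun x hx => ?_⟩
  have := hC.2.2 x hx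
  omega

theorem LL_row {m n : ℕ} (S : Finset (Fin m × Fin n)) (i j : ℕ) :
    LL S (i + 1) j ≤ LL S i j + 1 := by
  obtain ⟨C, hC, h⟩ := exists_LL S (i + 1) j
  rw [mem_chs] at hC
  obtain ⟨h1, h2, h3⟩ := hC
  rw [← h, ← Finset.card_filter_add_card_filter_not (s := C) (fun x => x.1.val < i)]
  apply Nat.add_le_add
  · apply card_le_LL
    rw [mem_chs]
    refine ⟨(Finset.filter_subset _ _).trans h1, h2.sub (Finset.filter_subset _ _), fun x hx => ?_⟩
    rw [Finset.mem_filter] at hx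
    exact ⟨hx.2, (h3 x hx.1).2⟩
  · rw [Finset.card_le_one]
    intro a ha b hb
    rw [Finset.mem_filter] at ha hb
    by_contra hab
    have := h2 a ha.1 b hb.1 hab
    have := h3 a ha.1
    have := h3 b hb.1
    omega

theorem LL_col {m n : ℕ} (S : Finset (Fin m × Fin n)) (i j : ℕ) :
    LL S i (j + 1) ≤ LL S i j + 1 := by
  obtain ⟨C, hC, h⟩ := exists_LL S i (j + 1)
  rw [mem_chs] at hC
  obtain ⟨h1, h2, h3⟩ := hC
  rw [← h, ← Finset.card_filter_add_card_filter_not (s := C) (fun x => x.2.val < j)]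
  apply Nat.add_le_add
  · apply card_le_LL
    rw [mem_chs]
    refine ⟨(Finset.filter_subset _ _).trans h1, h2.sub (Finset.filter_subset _ _), fun x hx => ?_⟩
    rw [Finset.mem_filter] at hx
    exact ⟨(h3 x hx.1).1, hx.2⟩
  · rw [Finset.card_le_one]
    intro a ha b hb
    rw [Finset.mem_filter] at ha hb
    by_contra hab
    have := h2 a ha.1 b hb.1 hab
    have := h3 a ha.1
    have := h3 b hb.1
    omega

/-- The discrete crossing step. -/
theorem cross {m n : ℕ} {P Q : Finset (Fin m × Fin n)} (hP : IsCh P) (hQ : IsCh Q) (i : ℕ)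
    (hQi : ∀ x ∈ Q, x.1.val < i) (k : ℕ) : ∀ r0, r0 + k = i →
    (∀ x ∈ Q, x.1.val < r0 → ∀ y ∈ P, r0 ≤ y.1.val → y.2.val < x.2.val) →
    ∃ r, r0 ≤ r ∧ r ≤ i ∧
      (∀ x ∈ Q, x.1.val < r → ∀ y ∈ P, r ≤ y.1.val → y.2.val < x.2.val) ∧
      (∀ x ∈ P, x.1.val < r → ∀ y ∈ Q, r ≤ y.1.val → y.2.val < x.2.val) := by
  induction k with
  | zero =>
    intro r0 h hA
    refine ⟨r0, le_rfl, by omega, hA, fun x _ _ y hy h2 => ?_⟩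
    have := hQi y hy
    omega
  | succ k ih =>
    intro r0 h hA
    by_cases hB : (∀ x ∈ P, x.1.val < r0 → ∀ y ∈ Q, r0 ≤ y.1.val → y.2.val < x.2.val)
    · exact ⟨r0, le_rfl, by omega, hA, hB⟩
    · push Not at hB
      obtain ⟨x, hx, hxr, y, hy, hyr, hxy⟩ := hB
      obtain ⟨r, h1, h2, h3⟩ := ih (r0 + 1) (by omega) (by
        intro u hu hur v hv hvr
        by_cases hlt : u.1.val < r0
        · exact hA u hu hlt v hv (by omega)
        · have h4 : y.2.val ≤ u.2.val := by
            by_cases hyu : y = u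
            · rw [hyu]
            · have := hQ y hy u hu hyu
              omega
          have hxv : x ≠ v := by
            rintro rfl
            omega
          have := hP x hx v hv hxv
          omega)
      exact ⟨r, by omega, h2, h3⟩

/-- Gluing the top part of one chain to the bottom part of another. -/
def glue {m n : ℕ} (r : ℕ) (P Q : Finset (Fin m × Fin n)) : Finset (Fin m × Fin n) :=
  (P.filter fun x => x.1.val < r) ∪ (Q.filter fun x => ¬ x.1.val < r)

theorem mem_glue {m n : ℕ} {r : ℕ} {P Q : Finset (Fin m × Fin n)} {x : Fin m × Fin n} :
    x ∈ glue r P Q ↔ (x ∈ P ∧ x.1.val < r) ∨ (x ∈ Q ∧ ¬ x.1.val < r) := by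
  simp [glue]

theorem card_glue {m n : ℕ} (r : ℕ) (P Q : Finset (Fin m × Fin n)) :
    (glue r P Q).card + (glue r Q P).card = P.card + Q.card := by
  have h : ∀ P Q : Finset (Fin m × Fin n), (glue r P Q).card =
      (P.filter fun x => x.1.val < r).card + (Q.filter fun x => ¬ x.1.val < r).card := by
    intro P Q
    apply Finset.card_union_of_disjoint
    rw [Finset.disjoint_left]
    intro a ha hb
    rw [Finset.mem_filter] at ha hb
    exact hb.2 ha.2
  rw [h, h, ← Finset.card_filter_add_card_filter_not (s := P) (fun x => x.1.val < r),
    ← Finset.card_filter_add_card_filter_not (s := Q) (fun x => x.1.val < r)]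
  omega

theorem IsCh.glue {m n : ℕ} {r : ℕ} {P Q : Finset (Fin m × Fin n)} (hP : IsCh P) (hQ : IsCh Q)
    (h : ∀ x ∈ P, x.1.val < r → ∀ y ∈ Q, r ≤ y.1.val → y.2.val < x.2.val) :
    IsCh (glue r P Q) := by
  intro x hx y hy hxy
  rw [mem_glue] at hx hy
  rcases hx with ⟨hx, hxr⟩ | ⟨hx, hxr⟩ <;> rcases hy with ⟨hy, hyr⟩ | ⟨hy, hyr⟩
  · exact hP x hx y hy hxy
  · left
    exact ⟨by omega, h x hx hxr y hy (by omega)⟩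
  · right
    exact ⟨by omega, h y hy hyr x hx (by omega)⟩
  · exact hQ x hx y hy hxy

theorem LL_monge {m n : ℕ} (S : Finset (Fin m × Fin n)) (i j : ℕ) :
    LL S i (j + 1) + LL S (i + 1) j ≤ LL S (i + 1) (j + 1) + LL S i j := by
  obtain ⟨Q, hQ, hQc⟩ := exists_LL S i (j + 1)
  obtain ⟨P, hP, hPc⟩ := exists_LL S (i + 1) j
  rw [mem_chs] at hQ hP
  obtain ⟨q1, q2, q3⟩ := hQ
  obtain ⟨p1, p2, p3⟩ := hP
  by_cases hj : ∀ x ∈ Q, x.2.val < j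
  · have h1 : Q.card ≤ LL S i j :=
      card_le_LL (mem_chs.2 ⟨q1, q2, fun x hx => ⟨(q3 x hx).1, hj x hx⟩⟩)
    have h2 := LL_mono S (le_refl (i + 1)) (Nat.le_succ j)
    simp only [Nat.succ_eq_add_one] at h2
    omega
  · push Not at hj
    obtain ⟨z, hz, hzj⟩ := hj
    have hz3 := q3 z hz
    obtain ⟨r, hr1, hr2, hA, hB⟩ := cross p2 q2 i (fun x hx => (q3 x hx).1) (i - (z.1.val + 1))
      (z.1.val + 1) (by omega) (by
        intro x hx hxr y hy hyr
        have hp := p3 y hy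
        by_cases hxz : x = z
        · rw [hxz]
          omega
        · have := q2 x hx z hz hxz
          have := q3 x hx
          omega)
    have e1 : (glue r Q P).card ≤ LL S (i + 1) (j + 1) := by
      apply card_le_LL
      rw [mem_chs]
      refine ⟨fun x hx => ?_, q2.glue p2 hA, fun x hx => ?_⟩
      · rw [mem_glue] at hx
        rcases hx with hx | hx
        · exact q1 hx.1
        · exact p1 hx.1
      · rw [mem_glue] at hx
        rcases hx with hx | hx
        · have := q3 x hx.1
          omega
        · have := p3 x hx.1
          omega
    have e2 : (glue r P Q).card ≤ LL S i j := by
      apply card_le_LL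
      rw [mem_chs]
      refine ⟨fun x hx => ?_, p2.glue q2 hB, fun x hx => ?_⟩
      · rw [mem_glue] at hx
        rcases hx with hx | hx
        · exact p1 hx.1
        · exact q1 hx.1
      · rw [mem_glue] at hx
        rcases hx with hx | hx
        · have := p3 x hx.1
          omega
        · have h5 := q3 x hx.1
          have hxz : x ≠ z := by
            rintro rfl
            omega
          have := q2 x hx.1 z hz hxz
          omega
    have := card_glue r P Q
    omega

theorem genMon_dvd {K : Type*} [Field K] {m n : ℕ} (A : Finset (Fin m)) (B : Finset (Fin n))
    (h : A.card = B.card) (d : (Fin m × Fin n) →₀ ℕ) (c : K) (hc : c ≠ 0) :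
    genMon K A B h ∣ MvPolynomial.monomial d c ↔
      ∀ t : Fin A.card, (A.orderEmbOfFin rfl t, B.orderEmbOfFin h.symm t.rev) ∈ d.support := by
  have hg : genMon K A B h = MvPolynomial.monomial (∑ t : Fin A.card,
      Finsupp.single (A.orderEmbOfFin rfl t, B.orderEmbOfFin h.symm t.rev) 1) (1 : K) := by
    rw [genMon, MvPolynomial.monomial_sum_one]
    rfl
  rw [hg, MvPolynomial.monomial_dvd_monomial]
  simp only [hc, false_or, one_dvd, and_true]
  have hinj : Function.Injective (fun t : Fin A.card =>
      (A.orderEmbOfFin rfl t, B.orderEmbOfFin h.symm t.rev)) := by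
    intro s t hst
    exact (A.orderEmbOfFin rfl).injective (congrArg Prod.fst hst)
  constructor
  · intro hle t
    have h1 := hle (A.orderEmbOfFin rfl t, B.orderEmbOfFin h.symm t.rev)
    rw [Finsupp.mem_support_iff]
    have h2 := Finset.single_le_sum (f := fun s : Fin A.card =>
      (Finsupp.single (A.orderEmbOfFin rfl s, B.orderEmbOfFin h.symm s.rev) 1 : _ →₀ ℕ)
        (A.orderEmbOfFin rfl t, B.orderEmbOfFin h.symm t.rev)) (fun _ _ => Nat.zero_le _)
        (Finset.mem_univ t)
    rw [Finsupp.finsetSum_apply] at h1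
    simp only [Finsupp.single_eq_same] at h2
    omega
  · intro hs v
    rw [Finsupp.finsetSum_apply]
    by_cases hv : ∃ t : Fin A.card, (A.orderEmbOfFin rfl t, B.orderEmbOfFin h.symm t.rev) = v
    · obtain ⟨t, rfl⟩ := hv
      rw [Finset.sum_eq_single t]
      · have := hs t
        rw [Finsupp.mem_support_iff] at this
        rw [Finsupp.single_eq_same]
        omega
      · intro s _ hst
        rw [Finsupp.single_eq_of_ne]
        exact fun h => hst (hinj h.symm)
      · simp
    · rw [Finset.sum_eq_zero]
      · exact Nat.zero_le _
      · intro t _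
        rw [Finsupp.single_eq_of_ne]
        exact fun h => hv ⟨t, h.symm⟩

theorem chain_to_sets {m n : ℕ} (C : Finset (Fin m × Fin n)) (hC : IsCh C) :
    ∃ (A : Finset (Fin m)) (B : Finset (Fin n)) (hA : A.card = C.card) (hB : B.card = C.card),
      A = C.image Prod.fst ∧ B = C.image Prod.snd ∧
      ∀ t : Fin A.card, (A.orderEmbOfFin rfl t, B.orderEmbOfFin (hB.trans hA.symm) t.rev) ∈ C := by
  have i1 : Set.InjOn Prod.fst (C : Set (Fin m × Fin n)) := by
    intro x hx y hy hxy
    by_contra hne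
    have := hC x hx y hy hne
    rw [hxy] at this
    omega
  have i2 : Set.InjOn Prod.snd (C : Set (Fin m × Fin n)) := by
    intro x hx y hy hxy
    by_contra hne
    have := hC x hx y hy hne
    rw [hxy] at this
    omega
  have hA := Finset.card_image_of_injOn i1
  have hB := Finset.card_image_of_injOn i2
  refine ⟨_, _, hA, hB, rfl, rfl, ?_⟩
  generalize hAA : C.image Prod.fst = A at *
  generalize hBB : C.image Prod.snd = B at *
  have hex : ∀ t : Fin A.card, ∃ b, (A.orderEmbOfFin rfl t, b) ∈ C := by
    intro t
    have := A.orderEmbOfFin_mem rfl t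
    obtain ⟨x, hx, hx2⟩ := Finset.mem_image.1 ((Finset.ext_iff.1 hAA _).2 this)
    refine ⟨x.2, ?_⟩
    rw [← hx2]
    exact hx
  choose g hg using hex
  have hanti : ∀ s t, s < t → g t < g s := by
    intro s t hst
    have h1 : A.orderEmbOfFin rfl s < A.orderEmbOfFin rfl t :=
      (A.orderEmbOfFin rfl).strictMono hst
    have := hC _ (hg s) _ (hg t) (by
      intro h
      exact h1.ne (congrArg Prod.fst h))
    simp only [Fin.lt_def] at *
    omega
  have hu : (fun t => g t.rev) = B.orderEmbOfFin (hB.trans hA.symm) := by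
    apply Finset.orderEmbOfFin_unique
    · intro t
      rw [← hBB]
      exact Finset.mem_image_of_mem Prod.snd (hg t.rev)
    · intro s t hst
      exact hanti _ _ (Fin.rev_lt_rev.2 hst)
  intro t
  rw [← hu]
  simpa using hg t

theorem sets_to_chain {m n : ℕ} (A : Finset (Fin m)) (B : Finset (Fin n)) (h : A.card = B.card) :
    ∃ C : Finset (Fin m × Fin n), IsCh C ∧ C.card = A.card ∧
      ∀ x ∈ C, (∃ t : Fin A.card, x = (A.orderEmbOfFin rfl t, B.orderEmbOfFin h.symm t.rev)) := by
  refine ⟨Finset.univ.image fun t : Fin A.card =>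
    (A.orderEmbOfFin rfl t, B.orderEmbOfFin h.symm t.rev), ?_, ?_, ?_⟩
  · intro x hx y hy hxy
    simp only [Finset.mem_image, Finset.mem_univ, true_and] at hx hy
    obtain ⟨s, rfl⟩ := hx
    obtain ⟨t, rfl⟩ := hy
    rcases lt_trichotomy s t with hst | hst | hst
    · left
      exact ⟨(A.orderEmbOfFin rfl).strictMono hst,
        (B.orderEmbOfFin h.symm).strictMono (Fin.rev_lt_rev.2 hst)⟩
    · exact absurd (by rw [hst]) hxy
    · right
      exact ⟨(A.orderEmbOfFin rfl).strictMono hst,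
        (B.orderEmbOfFin h.symm).strictMono (Fin.rev_lt_rev.2 hst)⟩
  · rw [Finset.card_image_of_injective]
    · simp
    · intro s t hst
      exact (A.orderEmbOfFin rfl).injective (congrArg Prod.fst hst)
  · intro x hx
    simp only [Finset.mem_image, Finset.mem_univ, true_and] at hx
    obtain ⟨t, ht⟩ := hx
    exact ⟨t, ht.symm⟩

theorem isGreatest_LL {K : Type*} [Field K] {m n : ℕ} (d : (Fin m × Fin n) →₀ ℕ) (c : K)
    (hc : c ≠ 0) (i j : ℕ) :
    IsGreatest {r : ℕ | ∃ (A : Finset (Fin m)) (B : Finset (Fin n))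
          (hA : A.card = r) (hB : B.card = r),
          (∀ a ∈ A, (a : ℕ) + 1 ≤ i) ∧ (∀ b ∈ B, (b : ℕ) + 1 ≤ j) ∧
            genMon K A B (hA.trans hB.symm) ∣ MvPolynomial.monomial d c}
        (LL d.support i j) := by
  constructor
  · obtain ⟨C, hC, hCc⟩ := exists_LL d.support i j
    rw [mem_chs] at hC
    obtain ⟨c1, c2, c3⟩ := hC
    obtain ⟨A, B, hA, hB, rA, rB, ht⟩ := chain_to_sets C c2
    refine ⟨A, B, hA.trans hCc, hB.trans hCc, ?_, ?_, ?_⟩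
    · intro a ha
      rw [rA] at ha
      obtain ⟨x, hx, rfl⟩ := Finset.mem_image.1 ha
      exact (c3 x hx).1
    · intro a ha
      rw [rB] at ha
      obtain ⟨x, hx, rfl⟩ := Finset.mem_image.1 ha
      exact (c3 x hx).2
    · rw [genMon_dvd _ _ _ _ _ hc]
      exact fun t => c1 (ht t)
  · rintro r ⟨A, B, hA, hB, h1, h2, h3⟩
    rw [genMon_dvd _ _ _ _ _ hc] at h3
    obtain ⟨C, hC, hCc, hx⟩ := sets_to_chain A B (hA.trans hB.symm)
    rw [← hA, ← hCc]
    apply card_le_LL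
    rw [mem_chs]
    refine ⟨fun x h => ?_, hC, fun x h => ?_⟩
    · obtain ⟨t, rfl⟩ := hx x h
      exact h3 t
    · obtain ⟨t, rfl⟩ := hx x h
      exact ⟨h1 _ (Finset.orderEmbOfFin_mem _ _ _), h2 _ (Finset.orderEmbOfFin_mem _ _ _)⟩

/-- Axioms of a rank table. -/
structure RankTable (L : ℕ → ℕ → ℕ) : Prop where
  z1 : ∀ j, L 0 j = 0
  z2 : ∀ i, L i 0 = 0
  r1 : ∀ i j, L i j ≤ L (i + 1) j
  r2 : ∀ i j, L (i + 1) j ≤ L i j + 1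
  c1 : ∀ i j, L i j ≤ L i (j + 1)
  c2 : ∀ i j, L i (j + 1) ≤ L i j + 1
  mg : ∀ i j, L i (j + 1) + L (i + 1) j ≤ L (i + 1) (j + 1) + L i j

/-- The partially sorted function attached to a rank table. -/
noncomputable def w0 (L : ℕ → ℕ → ℕ) (n : ℕ) : ℕ → ℕ
  | 0 => 0
  | i + 1 => if L (i + 1) n = L i n + 1 then sInf {j | L (i + 1) j = L i j + 1}
      else n + (i + 1 - L (i + 1) n)

namespace RankTable

variable {L : ℕ → ℕ → ℕ}

theorem le_row (h : RankTable L) (n i : ℕ) : L i n ≤ i := by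
  induction i with
  | zero => rw [h.z1]
  | succ i ih =>
    have := h.r2 i n
    omega

theorem step_mono (h : RankTable L) (i j j' : ℕ) (hj : j ≤ j') (hs : L (i + 1) j = L i j + 1) :
    L (i + 1) j' = L i j' + 1 := by
  induction j', hj using Nat.le_induction with
  | base => exact hs
  | succ k hk ih =>
    have := h.mg i k
    have := h.r2 i (k + 1)
    omega

theorem col_mono (h : RankTable L) (j i i' : ℕ) (hi : i ≤ i') :
    L i (j + 1) + L i' j ≤ L i' (j + 1) + L i j := by
  induction i', hi using Nat.le_induction with
  | base => omega
  | succ k hk ih =>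
    have := h.mg k j
    omega

theorem w0_matched (h : RankTable L) (n i : ℕ) (hs : L (i + 1) n = L i n + 1) :
    ∃ j, j < n ∧ w0 L n (i + 1) = j + 1 ∧ L (i + 1) (j + 1) = L i (j + 1) + 1 ∧
      L (i + 1) j = L i j := by
  have hw : w0 L n (i + 1) = sInf {j | L (i + 1) j = L i j + 1} := by
    rw [w0, if_pos hs]
  have h1 : L (i + 1) (sInf {j | L (i + 1) j = L i j + 1}) =
      L i (sInf {j | L (i + 1) j = L i j + 1}) + 1 :=
    Nat.sInf_mem (s := {j | L (i + 1) j = L i j + 1}) ⟨n, hs⟩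
  have h2 : sInf {j | L (i + 1) j = L i j + 1} ≤ n := Nat.sInf_le hs
  have h3 : ∀ k, k < sInf {j | L (i + 1) j = L i j + 1} → ¬ (L (i + 1) k = L i k + 1) :=
    fun k hk => Nat.notMem_of_lt_sInf (s := {j | L (i + 1) j = L i j + 1}) hk
  rw [← hw] at h1 h2 h3
  generalize w0 L n (i + 1) = k at *
  cases k with
  | zero =>
    rw [h.z2, h.z2] at h1
    omega
  | succ j =>
    refine ⟨j, by omega, rfl, h1, ?_⟩
    have := h3 j (by omega)
    have := h.r1 i j
    have := h.r2 i j
    omega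

theorem w0_unmatched (h : RankTable L) (n i : ℕ) (hs : ¬ L (i + 1) n = L i n + 1) :
    w0 L n (i + 1) + L (i + 1) n = n + (i + 1) ∧ L (i + 1) n = L i n ∧ n < w0 L n (i + 1) := by
  have hw : w0 L n (i + 1) = n + (i + 1 - L (i + 1) n) := by
    rw [w0, if_neg hs]
  have := h.r1 i n
  have := h.r2 i n
  have := h.le_row n i
  omega

theorem w0_pos (h : RankTable L) (n i : ℕ) : 1 ≤ w0 L n (i + 1) := by
  by_cases hs : L (i + 1) n = L i n + 1
  · obtain ⟨j, _, h2, _⟩ := h.w0_matched n i hs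
    omega
  · have := h.w0_unmatched n i hs
    omega

theorem w0_le_iff (h : RankTable L) (n i j : ℕ) (hj : j ≤ n) :
    w0 L n (i + 1) ≤ j ↔ L (i + 1) j = L i j + 1 := by
  by_cases hs : L (i + 1) n = L i n + 1
  · obtain ⟨k, h1, h2, h3, h4⟩ := h.w0_matched n i hs
    constructor
    · intro hle
      exact h.step_mono i (k + 1) j (by omega) h3
    · intro hj
      by_contra hlt
      have := h.step_mono i j k (by omega) hj
      omega
  · have := h.w0_unmatched n i hs
    constructor
    · intro hle
      omega
    · intro hj2
      exact absurd (h.step_mono i j n hj hj2) hs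

theorem u_mono (h : RankTable L) (n i i' : ℕ) (hi : i ≤ i') : i + L i' n ≤ i' + L i n := by
  induction i', hi using Nat.le_induction with
  | base => omega
  | succ k hk ih =>
    have := h.r2 k n
    omega

theorem w0_ne (h : RankTable L) (n a b : ℕ) (hab : a < b) : w0 L n a ≠ w0 L n b := by
  obtain ⟨b, rfl⟩ : ∃ c, b = c + 1 := ⟨b - 1, by omega⟩
  cases a with
  | zero =>
    have := h.w0_pos n b
    have h0 : w0 L n 0 = 0 := rfl
    omega
  | succ a =>
    intro he
    by_cases hb : L (b + 1) n = L b n + 1 <;> by_cases ha : L (a + 1) n = L a n + 1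
    · obtain ⟨k, a1, a2, a3, a4⟩ := h.w0_matched n a ha
      obtain ⟨l, b1, b2, b3, b4⟩ := h.w0_matched n b hb
      obtain rfl : k = l := by omega
      have := h.c1 a k
      have := h.c2 (b + 1) k
      have := h.col_mono k (a + 1) b (by omega)
      omega
    · have := h.w0_unmatched n a ha
      obtain ⟨l, b1, b2, b3, b4⟩ := h.w0_matched n b hb
      omega
    · have := h.w0_unmatched n b hb
      obtain ⟨l, b1, b2, b3, b4⟩ := h.w0_matched n a ha
      omega
    · have := h.w0_unmatched n b hb
      have := h.w0_unmatched n a ha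
      have := h.u_mono n (a + 1) b (by omega)
      omega

theorem w0_inj (h : RankTable L) (n : ℕ) : Function.Injective (w0 L n) := by
  intro a b hab
  rcases lt_trichotomy a b with hl | hl | hl
  · exact absurd hab (h.w0_ne n a b hl)
  · exact hl
  · exact absurd hab.symm (h.w0_ne n b a hl)

theorem w0_fill (h : RankTable L) (n s : ℕ) (hs : 1 ≤ s) (b : ℕ) (hb : s + L b n ≤ b) :
    ∃ a ≤ b, w0 L n a = n + s := by
  induction b with
  | zero => omega
  | succ b ih =>
    by_cases h1 : s + L b n ≤ b
    · obtain ⟨a, ha, h2⟩ := ih h1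
      exact ⟨a, by omega, h2⟩
    · have := h.r1 b n
      have h2 : ¬ L (b + 1) n = L b n + 1 := by omega
      have := h.w0_unmatched n b h2
      exact ⟨b + 1, le_rfl, by omega⟩

theorem w0_prev (h : RankTable L) (n v b : ℕ) (hv : n < v) (hb : w0 L n b = v + 1) :
    ∃ a ≤ b, w0 L n a = v := by
  cases b with
  | zero =>
    have h0 : w0 L n 0 = 0 := rfl
    omega
  | succ b =>
    by_cases h2 : L (b + 1) n = L b n + 1
    · obtain ⟨l, b1, b2, b3, b4⟩ := h.w0_matched n b h2
      omega
    · have := h.w0_unmatched n b h2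
      obtain ⟨a, h3, h4⟩ := h.w0_fill n (v - n) (by omega) (b + 1) (by omega)
      exact ⟨a, h3, by omega⟩

theorem exists_perm (h : RankTable L) (m n : ℕ) :
    ∃ w ∈ SmnInfty m n, ∀ i j, i ≤ m → j ≤ n → rnk w i j = L i j := by
  classical
  set p : ℕ → Prop := fun v => ∀ a ≤ m, w0 L n a ≠ v with hp
  have hfin : (setOf p)ᶜ.Finite := by
    refine ((Finset.range (m + 1)).image (w0 L n)).finite_toSet.subset ?_
    intro v hv
    have hv' : ¬ p v := hv
    simp only [hp] at hv'
    push Not at hv'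
    obtain ⟨a, ha, h2⟩ := hv'
    simp only [Finset.coe_image, Set.mem_image]
    exact ⟨a, by simp; omega, h2⟩
  have hinf : (setOf p).Infinite := by
    have := hfin.infinite_compl
    rwa [compl_compl] at this
  set f : ℕ → ℕ := fun i => if i ≤ m then w0 L n i else Nat.nth p (i - (m + 1)) with hf
  have f1 : ∀ i, i ≤ m → f i = w0 L n i := fun i hi => if_pos hi
  have f2 : ∀ i, ¬ i ≤ m → f i = Nat.nth p (i - (m + 1)) := fun i hi => if_neg hi
  have fmono : ∀ a b, ¬ a ≤ m → a < b → f a < f b := by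
    intro a b ha hab
    rw [f2 a ha, f2 b (by omega)]
    exact Nat.nth_strictMono hinf (by omega)
  have fne : ∀ a b, a < b → f a ≠ f b := by
    intro a b hab
    by_cases hb : b ≤ m
    · rw [f1 a (by omega), f1 b hb]
      exact h.w0_ne n a b hab
    · by_cases ha : a ≤ m
      · rw [f1 a ha, f2 b hb]
        exact Nat.nth_mem_of_infinite hinf _ a ha
      · exact (fmono a b ha hab).ne
  have finj : Function.Injective f := by
    intro a b hab
    rcases lt_trichotomy a b with hl | hl | hl
    · exact absurd hab (fne a b hl)
    · exact hl
    · exact absurd hab.symm (fne b a hl)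
  have fsurj : Function.Surjective f := by
    intro v
    by_cases hv : p v
    · refine ⟨Nat.count p v + (m + 1), ?_⟩
      rw [f2 _ (by omega), Nat.add_sub_cancel]
      exact Nat.nth_count hv
    · simp only [hp] at hv
      push Not at hv
      obtain ⟨a, ha, h2⟩ := hv
      exact ⟨a, by rw [f1 a ha, h2]⟩
  have fbig : ∀ x, (∀ a ≤ m, w0 L n a < x) → m < x → f x = x := by
    intro x hx hmx
    have hpx : p x := fun a ha => (hx a ha).ne
    have hc : Nat.count p x = x - (m + 1) := by
      rw [Nat.count_eq_card_filter_range]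
      have h1 := Finset.card_filter_add_card_filter_not (s := Finset.range x) p
      have h2 : (Finset.range x).filter (fun v => ¬ p v) =
          (Finset.range (m + 1)).image (w0 L n) := by
        ext v
        simp only [Finset.mem_filter, Finset.mem_range, Finset.mem_image, hp]
        push Not
        constructor
        · rintro ⟨_, a, ha, h3⟩
          exact ⟨a, by omega, h3⟩
        · rintro ⟨a, ha, rfl⟩
          exact ⟨hx a (by omega), a, by omega, rfl⟩
      rw [h2, Finset.card_image_of_injective _ (h.w0_inj n), Finset.card_range,
        Finset.card_range] at h1
      exact Nat.eq_sub_of_add_eq h1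
    rw [f2 x (by omega), ← hc]
    exact Nat.nth_count hpx
  set w : Equiv.Perm ℕ := Equiv.ofBijective f ⟨finj, fsurj⟩ with hw
  have wf : ∀ i, w i = f i := fun i => rfl
  refine ⟨w, ⟨⟨?_, ?_⟩, ?_, ?_⟩, ?_⟩
  · rw [wf, f1 0 (by omega)]
    rfl
  · refine (Set.finite_Iic (m + ∑ a ∈ Finset.range (m + 1), w0 L n a)).subset ?_
    intro x hx
    by_contra hlt
    rw [Set.mem_Iic] at hlt
    apply hx
    rw [wf]
    apply fbig
    · intro a ha
      have := Finset.single_le_sum (f := w0 L n) (fun _ _ => Nat.zero_le _)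
        (Finset.mem_range.2 (show a < m + 1 by omega))
      omega
    · omega
  · rintro i ⟨h1, h2⟩
    refine ⟨h1, ?_⟩
    by_contra hi
    have := fmono i (i + 1) hi (by omega)
    rw [wf, wf] at h2
    omega
  · rintro v ⟨h1, h2⟩
    refine ⟨h1, ?_⟩
    by_contra hv
    have ea : f (w⁻¹ v) = v := w.apply_symm_apply v
    have eb : f (w⁻¹ (v + 1)) = v + 1 := w.apply_symm_apply (v + 1)
    generalize w⁻¹ v = a at *
    generalize w⁻¹ (v + 1) = b at *
    by_cases hb : b ≤ m
    · rw [f1 b hb] at eb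
      obtain ⟨c, hc, h3⟩ := h.w0_prev n v b (by omega) eb
      have : a = c := finj (by rw [ea, f1 c (by omega), h3])
      omega
    · have := fmono b a hb h2
      omega
  · intro i j hi hj
    induction i with
    | zero =>
      rw [h.z1]
      rfl
    | succ i ih =>
      have hi' := ih (by omega)
      unfold rnk at *
      have e : Finset.Icc 1 (i + 1) = insert (i + 1) (Finset.Icc 1 i) := by
        ext x
        simp only [Finset.mem_Icc, Finset.mem_insert]
        omega
      have hni : i + 1 ∉ (Finset.Icc 1 i).filter fun a => w a ∈ Finset.Icc 1 j := by
        simp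
      have hpos := h.w0_pos n i
      have hiff := h.w0_le_iff n i j hj
      have hwi : w (i + 1) = w0 L n (i + 1) := by rw [wf, f1 _ hi]
      have := h.r1 i j
      have := h.r2 i j
      rw [e, Finset.filter_insert]
      split_ifs with hc
      · rw [Finset.card_insert_of_notMem hni, hi']
        rw [Finset.mem_Icc, hwi] at hc
        exact (hiff.1 hc.2).symm
      · rw [hi']
        rw [Finset.mem_Icc, hwi] at hc
        have : ¬ L (i + 1) j = L i j + 1 := fun hh => hc ⟨hpos, hiff.2 hh⟩
        omega

end RankTable

/-- For a monomial `M` in `K[u_{ij} : (i,j) ∈ [m] × [n]]` there is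
`w ∈ S^{m,n}_∞` with `r_M(i,j) = r_w(i,j)` for all `(i,j) ∈ [m] × [n]`, where
`r_M(i,j)` is the largest `r` such that `u_{AB} ∣ M` for some `A ⊆ [i]`, `B ⊆ [j]`
with `|A| = |B| = r`. -/
theorem statement10 (K : Type*) [Field K] (m n : ℕ) (hm : 1 ≤ m) (hn : 1 ≤ n)
    (M : MvPolynomial (Fin m × Fin n) K)
    (hM : ∃ (d : (Fin m × Fin n) →₀ ℕ) (c : K), c ≠ 0 ∧ M = MvPolynomial.monomial d c) :
    ∃ w ∈ SmnInfty m n, ∀ i j : ℕ, 1 ≤ i → i ≤ m → 1 ≤ j → j ≤ n →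
      IsGreatest {r : ℕ | ∃ (A : Finset (Fin m)) (B : Finset (Fin n))
          (hA : A.card = r) (hB : B.card = r),
          (∀ a ∈ A, (a : ℕ) + 1 ≤ i) ∧ (∀ b ∈ B, (b : ℕ) + 1 ≤ j) ∧
            genMon K A B (hA.trans hB.symm) ∣ M}
        (rnk w i j) := by
  obtain ⟨d, c, hc, rfl⟩ := hM
  have hL : RankTable (LL d.support) :=
    { z1 := LL_zero_left _
      z2 := LL_zero_right _
      r1 := fun i j => LL_mono _ (Nat.le_succ i) le_rfl
      r2 := LL_row _
      c1 := fun i j => LL_mono _ le_rfl (Nat.le_succ j)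
      c2 := LL_col _
      mg := LL_monge _ }
  obtain ⟨w, hw, hr⟩ := hL.exists_perm m n
  refine ⟨w, hw, fun i j _ hi _ hj => ?_⟩
  rw [hr i j hi hj]
  exact isGreatest_LL d c hc i j

end Paper
end

section
/- Let K be a field, let n >= 1, and let M be a monomial in K[u_{ij} : n >= i > j >= 1]. Then there exists z in FPF_n(I_n) such that r^ss_M(i,j) = r_z(i,j) for all i,j in [n]. -/
namespace Paper

/-- There is a strict antidiagonal chain of size `r` in `S` inside the `i × j` corner. -/
def Ch (S : ℕ → ℕ → Prop) (i j r : ℕ) : Prop :=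
  ∃ a b : ℕ → ℕ, (∀ t, t < r → S (a t) (b t) ∧ a t < i ∧ b t < j) ∧
    ∀ s t, s < t → t < r → a s < a t ∧ b t < b s

theorem Ch.zero (S : ℕ → ℕ → Prop) (i j : ℕ) : Ch S i j 0 :=
  ⟨fun _ => 0, fun _ => 0, fun t h => by omega, fun s t _ h => by omega⟩

theorem Ch.mono {S : ℕ → ℕ → Prop} {i j r i' j' r' : ℕ} (h : Ch S i j r)
    (hi : i ≤ i') (hj : j ≤ j') (hr : r' ≤ r) : Ch S i' j' r' := by
  obtain ⟨a, b, h1, h2⟩ := h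
  refine ⟨a, b, fun t ht => ?_, fun s t hs ht => h2 s t hs (by omega)⟩
  obtain ⟨x, y, w⟩ := h1 t (by omega)
  exact ⟨x, by omega, by omega⟩

theorem Ch.symm {S : ℕ → ℕ → Prop} (hS : ∀ x y, S x y → S y x) {i j r : ℕ}
    (h : Ch S i j r) : Ch S j i r := by
  obtain ⟨a, b, h1, h2⟩ := h
  refine ⟨fun t => b (r - 1 - t), fun t => a (r - 1 - t), fun t ht => ?_, fun s t hs ht => ?_⟩
  · obtain ⟨x, y, w⟩ := h1 (r - 1 - t) (by omega)
    exact ⟨hS _ _ x, w, y⟩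
  · obtain ⟨x, y⟩ := h2 (r - 1 - t) (r - 1 - s) (by omega) (by omega)
    exact ⟨y, x⟩

theorem Ch.le {S : ℕ → ℕ → Prop} {i j r : ℕ} (h : Ch S i j r) : r ≤ i := by
  obtain ⟨a, b, h1, h2⟩ := h
  have key : ∀ t, t < r → t ≤ a t := by
    intro t
    induction t with
    | zero => intro _; omega
    | succ t ih =>
      intro ht
      have := ih (by omega)
      have := (h2 t (t + 1) (by omega) ht).1
      omega
  rcases Nat.eq_zero_or_pos r with h | h
  · omega
  · have := key (r - 1) (by omega)
    have := (h1 (r - 1) (by omega)).2.1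
    omega

theorem Ch.drop {S : ℕ → ℕ → Prop} {i j r : ℕ} (h : Ch S (i + 1) j (r + 1)) : Ch S i j r := by
  obtain ⟨a, b, h1, h2⟩ := h
  refine ⟨a, b, fun t ht => ?_, fun s t hs ht => h2 s t hs (by omega)⟩
  obtain ⟨x, y, w⟩ := h1 t (by omega)
  have := (h2 t r ht (by omega)).1
  have := (h1 r (by omega)).2.1
  exact ⟨x, by omega, by omega⟩

theorem Ch.cross {S : ℕ → ℕ → Prop} {i j m : ℕ} (hC : Ch S i (j + 1) (m + 1))
    (hD : Ch S (i + 1) j (m + 1)) (hN : ¬ Ch S i j (m + 1)) : Ch S (i + 1) (j + 1) (m + 2) := by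
  by_contra hN2
  obtain ⟨a, b, h1, h2⟩ := hC
  obtain ⟨a', b', h1', h2'⟩ := hD
  have hb0 : b 0 = j := by
    by_contra hne
    apply hN
    refine ⟨a, b, fun t ht => ?_, h2⟩
    obtain ⟨x, y, w⟩ := h1 t ht
    refine ⟨x, y, ?_⟩
    have := (h1 0 (by omega)).2.2
    rcases Nat.eq_zero_or_pos t with h | h
    · subst h; omega
    · have := (h2 0 t h ht).2
      omega
  have ham : a' m = i := by
    by_contra hne
    apply hN
    refine ⟨a', b', fun t ht => ?_, h2'⟩
    obtain ⟨x, y, w⟩ := h1' t ht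
    refine ⟨x, ?_, w⟩
    have := (h1' m (by omega)).2.1
    rcases Nat.lt_or_ge t m with h | h
    · have := (h2' t m h (by omega)).1
      omega
    · have : t = m := by omega
      subst this; omega
  have n1 : ∀ k, k ≤ m → ¬ (a k < a' k ∧ b' k < b k) := by
    intro k hk ⟨ha, hb⟩
    apply hN2
    refine ⟨fun t => if t ≤ k then a t else a' (t - 1),
      fun t => if t ≤ k then b t else b' (t - 1), fun t ht => ?_, fun s t hs ht => ?_⟩
    · by_cases htk : t ≤ k
      · simp only [htk, if_true]
        obtain ⟨x, y, w⟩ := h1 t (by omega)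
        exact ⟨x, by omega, by omega⟩
      · simp only [htk, if_false]
        obtain ⟨x, y, w⟩ := h1' (t - 1) (by omega)
        exact ⟨x, by omega, by omega⟩
    · by_cases htk : t ≤ k
      · have hsk : s ≤ k := by omega
        simp only [htk, hsk, if_true]
        exact h2 s t hs (by omega)
      · by_cases hsk : s ≤ k
        · simp only [htk, hsk, if_true, if_false]
          have e1 : a s ≤ a k ∧ b k ≤ b s := by
            rcases Nat.lt_or_ge s k with h | h
            · have := h2 s k h (by omega); omega
            · have : s = k := by omega
              subst this; omega
          have e2 : a' k ≤ a' (t - 1) ∧ b' (t - 1) ≤ b' k := by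
            rcases Nat.lt_or_ge k (t - 1) with h | h
            · have := h2' k (t - 1) h (by omega); omega
            · have : k = t - 1 := by omega
              subst this; omega
          omega
        · simp only [htk, hsk, if_false]
          exact h2' (s - 1) (t - 1) (by omega) (by omega)
  have n2 : ∀ k, k + 1 ≤ m → ¬ (a' k < a (k + 1) ∧ b (k + 1) < b' k) := by
    intro k hk ⟨ha, hb⟩
    apply hN
    have f1 : ∀ t, t ≤ k → a' t ≤ a' k ∧ b' k ≤ b' t := by
      intro t ht
      rcases Nat.lt_or_ge t k with h | h
      · have := h2' t k h (by omega); omega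
      · have : t = k := by omega
        subst this; omega
    have f2 : ∀ t, k < t → t < m + 1 → a (k + 1) ≤ a t ∧ b t ≤ b (k + 1) := by
      intro t ht htm
      rcases Nat.lt_or_ge (k + 1) t with h | h
      · have := h2 (k + 1) t h (by omega); omega
      · have : t = k + 1 := by omega
        subst this; omega
    refine ⟨fun t => if t ≤ k then a' t else a t,
      fun t => if t ≤ k then b' t else b t, fun t ht => ?_, fun s t hs ht => ?_⟩
    · by_cases htk : t ≤ k
      · simp only [htk, if_true]
        obtain ⟨x, y, w⟩ := h1' t (by omega)
        have := f1 t htk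
        have := (h1 (k + 1) (by omega)).2.1
        exact ⟨x, by omega, by omega⟩
      · simp only [htk, if_false]
        obtain ⟨x, y, w⟩ := h1 t (by omega)
        have := f2 t (by omega) ht
        have := (h1' k (by omega)).2.2
        exact ⟨x, by omega, by omega⟩
    · by_cases htk : t ≤ k
      · have hsk : s ≤ k := by omega
        simp only [htk, hsk, if_true]
        exact h2' s t hs (by omega)
      · by_cases hsk : s ≤ k
        · simp only [htk, hsk, if_true, if_false]
          have := f1 s hsk
          have := f2 t (by omega) ht
          omega
        · simp only [htk, hsk, if_false]
          exact h2 s t hs ht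
  have inv : ∀ k, k ≤ m → b' k < b k := by
    intro k
    induction k with
    | zero =>
      intro _
      have := (h1' 0 (by omega)).2.2
      omega
    | succ k ih =>
      intro hk
      have i1 := ih (by omega)
      have i2 := n1 k (by omega)
      have i3 := n2 k hk
      have i4 := h2 k (k + 1) (by omega) (by omega)
      have i5 := h2' k (k + 1) (by omega) (by omega)
      omega
  have j1 := inv m le_rfl
  have j2 := n1 m le_rfl
  have j3 := (h1 m (by omega)).2.1
  omega

theorem Ch.parity_aux {S : ℕ → ℕ → Prop} (hS : ∀ x y, S x y → S y x)
    {i k : ℕ} (a b : ℕ → ℕ) (h1 : ∀ t, t < 2 * k + 1 → S (a t) (b t) ∧ a t < i ∧ b t < i)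
    (h2 : ∀ s t, s < t → t < 2 * k + 1 → a s < a t ∧ b t < b s) (hk : a k < b k) :
    Ch S i i (2 * k + 2) := by
  have f1 : ∀ t, t ≤ k → a t ≤ a k ∧ b k ≤ b t := by
    intro t ht
    rcases Nat.lt_or_ge t k with h | h
    · have := h2 t k h (by omega); omega
    · have : t = k := by omega
      subst this; omega
  refine ⟨fun t => if t ≤ k then a t else b (2 * k + 1 - t),
    fun t => if t ≤ k then b t else a (2 * k + 1 - t), fun t ht => ?_, fun s t hs ht => ?_⟩
  · by_cases htk : t ≤ k
    · simp only [htk, if_true]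
      exact h1 t (by omega)
    · simp only [htk, if_false]
      obtain ⟨x, y, w⟩ := h1 (2 * k + 1 - t) (by omega)
      exact ⟨hS _ _ x, w, y⟩
  · by_cases htk : t ≤ k
    · have hsk : s ≤ k := by omega
      simp only [htk, hsk, if_true]
      exact h2 s t hs (by omega)
    · by_cases hsk : s ≤ k
      · simp only [htk, hsk, if_true, if_false]
        have := f1 s hsk
        have := f1 (2 * k + 1 - t) (by omega)
        omega
      · simp only [htk, hsk, if_false]
        have := h2 (2 * k + 1 - t) (2 * k + 1 - s) (by omega) (by omega)
        exact ⟨this.2, this.1⟩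

theorem Ch.parity {S : ℕ → ℕ → Prop} (hS : ∀ x y, S x y → S y x) (hd : ∀ x, ¬ S x x)
    {i k : ℕ} (h : Ch S i i (2 * k + 1)) : Ch S i i (2 * k + 2) := by
  obtain ⟨a, b, h1, h2⟩ := h
  rcases Nat.lt_trichotomy (a k) (b k) with h | h | h
  · exact Ch.parity_aux hS a b h1 h2 h
  · have := (h1 k (by omega)).1
    rw [h] at this
    exact absurd this (hd _)
  · refine Ch.parity_aux hS (fun t => b (2 * k - t)) (fun t => a (2 * k - t)) ?_ ?_ ?_
    · intro t ht
      obtain ⟨x, y, w⟩ := h1 (2 * k - t) (by omega)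
      exact ⟨hS _ _ x, w, y⟩
    · intro s t hs ht
      obtain ⟨x, y⟩ := h2 (2 * k - t) (2 * k - s) (by omega) (by omega)
      exact ⟨y, x⟩
    · have : 2 * k - k = k := by omega
      simpa only [this] using h

theorem exists_rank (S : ℕ → ℕ → Prop) :
    ∃ r : ℕ → ℕ → ℕ, ∀ i j m, Ch S i j m ↔ m ≤ r i j := by
  classical
  refine ⟨fun i j => Nat.findGreatest (Ch S i j) i, fun i j m => ⟨fun h => ?_, fun h => ?_⟩⟩
  · exact Nat.le_findGreatest h.le h
  · have : Ch S i j (Nat.findGreatest (Ch S i j) i) :=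
      Nat.findGreatest_spec (Nat.zero_le i) (Ch.zero S i j)
    exact this.mono le_rfl le_rfl h

theorem Icc_one_succ (i : ℕ) : Finset.Icc 1 (i + 1) = insert (i + 1) (Finset.Icc 1 i) := by
  ext x; simp only [Finset.mem_Icc, Finset.mem_insert]; omega

theorem exists_z (n : ℕ) (r : ℕ → ℕ → ℕ) (h0 : ∀ j, r 0 j = 0) (hsym : ∀ i j, r i j = r j i)
    (hstep : ∀ i j, r i j ≤ r (i + 1) j ∧ r (i + 1) j ≤ r i j + 1)
    (hsup : ∀ i j, r (i + 1) j = r i j + 1 → r (i + 1) (j + 1) = r i (j + 1) + 1)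
    (hev : ∀ i, r i i % 2 = 0) :
    ∃ z ∈ FPFIn n, ∀ i j, i ≤ n → j ≤ n → rnk z i j = r i j := by
  have hp : ∀ i, ∃ q, 1 ≤ q ∧ q ≤ n + 1 ∧
      ∀ j, j ≤ n → r (i + 1) j = r i j + if q ≤ j then 1 else 0 := by
    intro i
    by_cases hex : ∃ j, r (i + 1) j = r i j + 1
    · classical
      have hs := Nat.find_spec hex
      have hm := fun m => Nat.find_min hex (m := m)
      generalize Nat.find hex = q at hs hm
      have hq : 1 ≤ q := by
        by_contra hq
        have : q = 0 := by omega
        subst this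
        rw [hsym, hsym i, h0, h0] at hs
        omega
      have up : ∀ t, r (i + 1) (q + t) = r i (q + t) + 1 := by
        intro t
        induction t with
        | zero => exact hs
        | succ t ih => exact hsup _ _ ih
      refine ⟨min q (n + 1), by omega, by omega, fun j hj => ?_⟩
      split_ifs with h
      · have := up (j - q)
        rwa [show q + (j - q) = j by omega] at this
      · have := hm j (by omega)
        have := hstep i j
        omega
    · refine ⟨n + 1, by omega, le_rfl, fun j hj => ?_⟩
      have h1 : ¬ r (i + 1) j = r i j + 1 := fun h => hex ⟨j, h⟩
      have := hstep i j
      rw [if_neg (by omega)]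
      omega
  choose p' hp1 hp2 hp3 using hp
  obtain ⟨p, hpp⟩ : ∃ p : ℕ → ℕ, ∀ i, p (i + 1) = p' i := ⟨fun i => p' (i - 1), fun i => rfl⟩
  have hpr : ∀ i j, 1 ≤ i → j ≤ n → r i j = r (i - 1) j + if p i ≤ j then 1 else 0 := by
    intro i j hi hj
    obtain ⟨i, rfl⟩ : ∃ i', i = i' + 1 := ⟨i - 1, by omega⟩
    rw [hpp]
    exact hp3 i j hj
  have hpos : ∀ i, 1 ≤ i → 1 ≤ p i := by
    intro i hi
    obtain ⟨i, rfl⟩ : ∃ i', i = i' + 1 := ⟨i - 1, by omega⟩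
    rw [hpp]; exact hp1 i
  -- involution
  have hinv : ∀ i, 1 ≤ i → i ≤ n → p i ≤ n → p (p i) = i := by
    intro i hi hin hpi
    have e1 := hpr i (p i) hi hpi
    have e2 := hpr i (p i - 1) hi (by omega)
    have q1 := hpos i hi
    have e3 := hpr (p i) i q1 hin
    have e4 := hpr (p i) (i - 1) q1 (by omega)
    rw [if_pos le_rfl] at e1
    rw [if_neg (by omega)] at e2
    rw [hsym (p i) i, hsym (p i - 1) i] at e3
    rw [hsym (p i) (i - 1), hsym (p i - 1) (i - 1)] at e4
    split_ifs at e3 e4 <;> omega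
  have hfix : ∀ i, 1 ≤ i → i ≤ n → p i ≠ i := by
    intro i hi hin hpi
    have e1 := hpr i i hi hin
    have e2 := hpr i (i - 1) hi (by omega)
    rw [hpi, if_pos le_rfl] at e1
    rw [hpi, if_neg (by omega)] at e2
    rw [hsym i (i - 1)] at e2
    have := hev i
    have := hev (i - 1)
    omega
  -- unmatched points
  let Q : ℕ → Prop := fun i => 1 ≤ i ∧ i ≤ n ∧ n < p i
  have hcount : ∀ i, i ≤ n → r i n + Nat.count Q (i + 1) = i := by
    intro i
    induction i with
    | zero =>
      intro _
      rw [h0, Nat.count_succ, Nat.count_zero, if_neg (fun h => by have := h.1; omega)]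
    | succ i ih =>
      intro hi
      have := ih (by omega)
      have e := hpr (i + 1) n (by omega) le_rfl
      rw [Nat.add_sub_cancel] at e
      rw [Nat.count_succ, e]
      by_cases hq : p (i + 1) ≤ n
      · rw [if_pos hq, if_neg (fun h => by have := h.2.2; omega)]
        omega
      · rw [if_neg hq, if_pos ⟨by omega, hi, by omega⟩]
        omega
  obtain ⟨k, hk⟩ : ∃ k, k = Nat.count Q (n + 1) := ⟨_, rfl⟩
  have hnk : (n + k) % 2 = 0 := by
    have := hcount n le_rfl
    have := hev n
    omega
  have hc1 : ∀ i, Q i → Nat.count Q i < k := by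
    intro i hi
    rw [hk]
    exact Nat.count_strict_mono hi (by have := hi.2.1; omega)
  have hn1 : ∀ t, t < k → Q (Nat.nth Q t) := by
    intro t ht
    refine Nat.nth_mem t fun hf => lt_of_lt_of_le ht ?_
    rw [hk]; exact Nat.count_le_card hf _
  have hn2 : ∀ t, t < k → Nat.count Q (Nat.nth Q t) = t := by
    intro t ht
    refine Nat.count_nth fun hf => lt_of_lt_of_le ht ?_
    rw [hk]; exact Nat.count_le_card hf _
  have hn3 : ∀ i, Q i → Nat.nth Q (Nat.count Q i) = i := fun i hi => Nat.nth_count hi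
  let zf : ℕ → ℕ := fun i =>
    if i = 0 then 0
    else if i ≤ n then (if p i ≤ n then p i else n + 1 + Nat.count Q i)
    else if i ≤ n + k then Nat.nth Q (i - n - 1)
    else if i % 2 = 1 then i + 1 else i - 1
  have z0 : zf 0 = 0 := by simp [zf]
  have zA : ∀ i, 1 ≤ i → i ≤ n → p i ≤ n → zf i = p i := by
    intro i h1 h2 h3
    simp only [zf]
    rw [if_neg (by omega), if_pos h2, if_pos h3]
  have zB : ∀ i, Q i → zf i = n + 1 + Nat.count Q i := by
    intro i h
    obtain ⟨h1, h2, h3⟩ := h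
    simp only [zf]
    rw [if_neg (by omega), if_pos h2, if_neg (by omega)]
  have zC : ∀ t, t < k → zf (n + 1 + t) = Nat.nth Q t := by
    intro t ht
    simp only [zf]
    rw [if_neg (by omega), if_neg (by omega), if_pos (by omega)]
    congr 1
    omega
  have zD : ∀ i, n + k < i → zf i = if i % 2 = 1 then i + 1 else i - 1 := by
    intro i h
    simp only [zf]
    rw [if_neg (by omega), if_neg (by omega), if_neg (by omega)]
  have cases4 : ∀ i, 1 ≤ i → (i ≤ n ∧ p i ≤ n) ∨ Q i ∨ (∃ t, t < k ∧ i = n + 1 + t) ∨ n + k < i := by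
    intro i hi
    by_cases h1 : i ≤ n
    · by_cases h2 : p i ≤ n
      · exact Or.inl ⟨h1, h2⟩
      · exact Or.inr (Or.inl ⟨hi, h1, by omega⟩)
    · by_cases h2 : i ≤ n + k
      · exact Or.inr (Or.inr (Or.inl ⟨i - n - 1, by omega, by omega⟩))
      · exact Or.inr (Or.inr (Or.inr (by omega)))
  have zinv : Function.Involutive zf := by
    intro i
    rcases Nat.eq_zero_or_pos i with rfl | hi
    · rw [z0, z0]
    rcases cases4 i hi with ⟨h1, h2⟩ | h | ⟨t, ht, rfl⟩ | h
    · rw [zA i hi h1 h2, zA (p i) (hpos i hi) h2 (by rw [hinv i hi h1 h2]; exact h1),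
        hinv i hi h1 h2]
    · rw [zB i h, zC _ (hc1 i h), hn3 i h]
    · rw [zC t ht, zB _ (hn1 t ht), hn2 t ht]
    · rw [zD i h]
      split_ifs with hm
      · rw [zD _ (by omega), if_neg (by omega)]; omega
      · rw [zD _ (by omega), if_pos (by omega)]; omega
  refine ⟨zinv.toPerm, ⟨⟨z0, ?_, ?_, n + k + 1, ?_⟩, ?_⟩, ?_⟩
  · intro i hi
    change zf i ≠ i
    rcases cases4 i hi with ⟨h1, h2⟩ | h | ⟨t, ht, rfl⟩ | h
    · rw [zA i hi h1 h2]; exact hfix i hi h1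
    · rw [zB i h]; have := h.2.1; omega
    · rw [zC t ht]; have := (hn1 t ht).2.1; omega
    · rw [zD i h]; split_ifs <;> omega
  · ext i
    exact zinv i
  · intro i hi
    change zf i = oneFPF i
    rw [zD i (by omega)]; rfl
  · rintro ⟨i, j⟩ ⟨hj, hji', hji, hij⟩
    change j < zf i at hji'
    change i < zf j at hij
    simp only at hj hji
    suffices h : i ≤ n by
      simp only [Set.mem_prod, Set.mem_Icc]; omega
    rcases cases4 i (by omega) with ⟨h1, h2⟩ | h | ⟨t, ht, rfl⟩ | h
    · exact h1
    · exact h.2.1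
    · exfalso
      rw [zC t ht] at hji'
      have q1 := hn1 t ht
      have q2 := hn2 t ht
      have q3 := q1.2.1
      rcases cases4 j hj with ⟨h1, h2⟩ | h | ⟨s, hs, rfl⟩ | h
      · rw [zA j hj h1 h2] at hij; omega
      · rw [zB j h] at hij
        have := Nat.count_strict_mono h hji'
        omega
      · omega
      · omega
    · exfalso
      rcases cases4 j hj with ⟨h1, h2⟩ | h' | ⟨s, hs, rfl⟩ | h'
      · rw [zA j hj h1 h2] at hij; omega
      · rw [zB j h'] at hij
        have := hc1 j h'
        omega
      · rw [zC s hs] at hij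
        have := (hn1 s hs).2.1
        omega
      · rw [zD j h'] at hij
        split_ifs at hij <;> omega
  · intro i j hi hj
    induction i with
    | zero => rw [h0]; simp [rnk]
    | succ i ih =>
      have e := hpr (i + 1) j (by omega) hj
      rw [Nat.add_sub_cancel] at e
      rw [e, ← ih (by omega)]
      unfold rnk
      rw [Icc_one_succ, Finset.filter_insert]
      have hiff : (Function.Involutive.toPerm zf zinv) (i + 1) ∈ Finset.Icc 1 j ↔ p (i + 1) ≤ j := by
        change zf (i + 1) ∈ Finset.Icc 1 j ↔ _
        rw [Finset.mem_Icc]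
        by_cases h2 : p (i + 1) ≤ n
        · rw [zA (i + 1) (by omega) hi h2]
          have := hpos (i + 1) (by omega)
          omega
        · rw [zB (i + 1) ⟨by omega, hi, by omega⟩]
          omega
      by_cases h : p (i + 1) ≤ j
      · rw [if_pos (hiff.2 h), if_pos h, Finset.card_insert_of_notMem]
        simp
      · rw [if_neg (fun hh => h (hiff.1 hh)), if_neg h]
        rfl

/-- The symmetric support of an exponent vector. -/
def Supp {n : ℕ} (d : SSVar n →₀ ℕ) (x y : ℕ) : Prop :=
  ∃ v : SSVar n, d v ≠ 0 ∧
    (((v.1.1 : ℕ) = x ∧ (v.1.2 : ℕ) = y) ∨ ((v.1.1 : ℕ) = y ∧ (v.1.2 : ℕ) = x))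

theorem prod_X_dvd {σ : Type*} {K : Type*} [Field K] (F : Finset σ) (d : σ →₀ ℕ) (c : K)
    (h : ∀ v ∈ F, d v ≠ 0) : ∏ v ∈ F, MvPolynomial.X v ∣ MvPolynomial.monomial d c := by
  classical
  have e : ∏ v ∈ F, (MvPolynomial.X v : MvPolynomial σ K) =
      MvPolynomial.monomial (∑ v ∈ F, Finsupp.single v 1) 1 := by
    rw [MvPolynomial.monomial_sum_one]; rfl
  rw [e, MvPolynomial.monomial_dvd_monomial]
  refine ⟨Or.inr ?_, one_dvd _⟩
  intro v
  rw [Finsupp.finsetSum_apply]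
  simp only [Finsupp.single_apply, Finset.sum_ite_eq']
  split_ifs with hv
  · have := h v hv; omega
  · omega

theorem bridge {K : Type*} [Field K] {n : ℕ} (d : SSVar n →₀ ℕ) (c : K) (hc : c ≠ 0)
    (i j r : ℕ) (hi : i ≤ n) (hj : j ≤ n) :
    (∃ A B : Finset (Fin n), A.card = r ∧ B.card = r ∧
          (∀ a ∈ A, (a : ℕ) + 1 ≤ i) ∧ (∀ b ∈ B, (b : ℕ) + 1 ≤ j) ∧
          ussMon K A B ∣ MvPolynomial.monomial d c) ↔ Ch (Supp d) i j r := by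
  constructor
  · rintro ⟨A, B, rfl, hB, hA1, hB1, hdvd⟩
    unfold ussMon at hdvd
    rw [dif_pos hB.symm] at hdvd
    split_ifs at hdvd with hex
    · rw [zero_dvd_iff, MvPolynomial.monomial_eq_zero] at hdvd
      exact absurd hdvd hc
    have hd : ∀ v : SSVar n, (∃ t : Fin A.card,
          (A.orderEmbOfFin rfl t = v.1.1 ∧ B.orderEmbOfFin hB t.rev = v.1.2) ∨
          (A.orderEmbOfFin rfl t = v.1.2 ∧ B.orderEmbOfFin hB t.rev = v.1.1)) → d v ≠ 0 := by
      intro v hv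
      have h1 : (MvPolynomial.X v : MvPolynomial (SSVar n) K) ∣ MvPolynomial.monomial d c := by
        refine dvd_trans ?_ hdvd
        apply Finset.dvd_prod_of_mem (fun v : SSVar n => (MvPolynomial.X v : MvPolynomial (SSVar n) K))
        rw [Finset.mem_filter]
        exact ⟨Finset.mem_univ _, hv⟩
      rw [MvPolynomial.X_dvd_monomial] at h1
      exact h1.resolve_left hc
    have hne : ∀ t : Fin A.card, A.orderEmbOfFin rfl t ≠ B.orderEmbOfFin hB t.rev :=
      fun t ht => hex ⟨t, ht⟩
    refine ⟨fun t => if h : t < A.card then (A.orderEmbOfFin rfl ⟨t, h⟩ : ℕ) else 0,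
      fun t => if h : t < A.card then (B.orderEmbOfFin hB (Fin.rev ⟨t, h⟩) : ℕ) else 0, ?_, ?_⟩
    · intro t ht
      simp only [ht, dif_pos]
      refine ⟨?_, hA1 _ (Finset.orderEmbOfFin_mem _ _ _), hB1 _ (Finset.orderEmbOfFin_mem _ _ _)⟩
      rcases lt_or_gt_of_ne (hne ⟨t, ht⟩) with h | h
      · exact ⟨⟨(_, _), h⟩, hd _ ⟨⟨t, ht⟩, Or.inr ⟨rfl, rfl⟩⟩, Or.inr ⟨rfl, rfl⟩⟩
      · exact ⟨⟨(_, _), h⟩, hd _ ⟨⟨t, ht⟩, Or.inl ⟨rfl, rfl⟩⟩, Or.inl ⟨rfl, rfl⟩⟩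
    · intro s t hs ht
      have hs' : s < A.card := by omega
      simp only [ht, hs', dif_pos]
      have hlt : (⟨s, hs'⟩ : Fin A.card) < ⟨t, ht⟩ := hs
      exact ⟨(A.orderEmbOfFin rfl).strictMono hlt,
        (B.orderEmbOfFin hB).strictMono (Fin.rev_lt_rev.2 hlt)⟩
  · rintro ⟨a, b, h1, h2⟩
    let f : Fin r → Fin n := fun t => ⟨a t, by have := (h1 t t.2).2.1; omega⟩
    let g : Fin r → Fin n := fun t => ⟨b t.rev, by have := (h1 t.rev t.rev.2).2.2; omega⟩
    have hf : StrictMono f := fun s t hst => (h2 s t hst t.2).1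
    have hg : StrictMono g := fun s t hst =>
      (h2 t.rev s.rev (Fin.rev_lt_rev.2 hst) s.rev.2).2
    have hA : (Finset.univ.image f).card = r := by
      rw [Finset.card_image_of_injective _ hf.injective, Finset.card_fin]
    have hB : (Finset.univ.image g).card = r := by
      rw [Finset.card_image_of_injective _ hg.injective, Finset.card_fin]
    have ef := Finset.orderEmbOfFin_unique hA (f := f) (fun x => by simp) hf
    have eg := Finset.orderEmbOfFin_unique hB (f := g) (fun x => by simp) hg
    refine ⟨Finset.univ.image f, Finset.univ.image g, hA, hB, ?_, ?_, ?_⟩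
    · intro x hx
      obtain ⟨t, -, rfl⟩ := Finset.mem_image.1 hx
      exact (h1 t t.2).2.1
    · intro x hx
      obtain ⟨t, -, rfl⟩ := Finset.mem_image.1 hx
      exact (h1 t.rev t.rev.2).2.2
    · generalize Finset.univ.image f = A at *
      generalize Finset.univ.image g = B at *
      subst hA
      have ef' : ∀ t, A.orderEmbOfFin rfl t = f t := fun t => (congrFun ef t).symm
      have eg' : ∀ t, B.orderEmbOfFin hB t = g t := fun t => (congrFun eg t).symm
      have hgr : ∀ t : Fin A.card, (g t.rev : ℕ) = b t := by
        intro t; simp [g]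
      have hsupp : ∀ t : Fin A.card, Supp d (f t) (g t.rev) := by
        intro t
        rw [hgr]; exact (h1 t t.2).1
      unfold ussMon
      rw [dif_pos hB.symm, if_neg]
      · apply prod_X_dvd
        intro v hv
        obtain ⟨-, t, ht⟩ := Finset.mem_filter.1 hv
        rw [ef', eg'] at ht
        obtain ⟨w, hw, hw2⟩ := hsupp t
        have : w = v := by
          have l1 := v.2
          have l2 := w.2
          rw [Fin.lt_def] at l1 l2
          rcases ht with ⟨e1, e2⟩ | ⟨e1, e2⟩ <;> rw [e1, e2] at hw2 <;>
            exact Subtype.ext (Prod.ext (Fin.ext (by omega)) (Fin.ext (by omega)))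
        rw [← this]; exact hw
      · rintro ⟨t, ht⟩
        rw [ef', eg'] at ht
        obtain ⟨w, hw, hw2⟩ := hsupp t
        have l2 := w.2
        rw [Fin.lt_def] at l2
        rw [ht] at hw2
        omega

/-- For a monomial `M` in `K[u_{ij} : n ≥ i > j ≥ 1]` there is
`z ∈ FPF_n(I_n)` with `r^ss_M(i,j) = r_z(i,j)` for all `i, j ∈ [n]`, where
`r^ss_M(i,j)` is the largest `r` such that `u^ss_{AB} ∣ M` for some `A ⊆ [i]`,
`B ⊆ [j]` with `|A| = |B| = r`. -/
theorem statement11 (K : Type*) [Field K] (n : ℕ) (hn : 1 ≤ n)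
    (M : MvPolynomial (SSVar n) K)
    (hM : ∃ (d : SSVar n →₀ ℕ) (c : K), c ≠ 0 ∧ M = MvPolynomial.monomial d c) :
    ∃ z ∈ FPFIn n, ∀ i j : ℕ, 1 ≤ i → i ≤ n → 1 ≤ j → j ≤ n →
      IsGreatest {r : ℕ | ∃ A B : Finset (Fin n), A.card = r ∧ B.card = r ∧
          (∀ a ∈ A, (a : ℕ) + 1 ≤ i) ∧ (∀ b ∈ B, (b : ℕ) + 1 ≤ j) ∧ ussMon K A B ∣ M}
        (rnk z i j) := by
  obtain ⟨d, c, hc, rfl⟩ := hM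
  have hS : ∀ x y, Supp d x y → Supp d y x := by
    rintro x y ⟨v, hv, h⟩
    exact ⟨v, hv, h.symm⟩
  have hd : ∀ x, ¬ Supp d x x := by
    rintro x ⟨v, hv, h⟩
    have := v.2
    rw [Fin.lt_def] at this
    omega
  obtain ⟨r, hr⟩ := exists_rank (Supp d)
  have hself : ∀ i j, Ch (Supp d) i j (r i j) := fun i j => (hr i j _).2 le_rfl
  have hsym : ∀ i j, r i j = r j i := fun i j =>
    le_antisymm ((hr _ _ _).1 ((hself i j).symm hS)) ((hr _ _ _).1 ((hself j i).symm hS))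
  have hstep : ∀ i j, r i j ≤ r (i + 1) j ∧ r (i + 1) j ≤ r i j + 1 := by
    intro i j
    refine ⟨(hr _ _ _).1 ((hself i j).mono (by omega) le_rfl le_rfl), ?_⟩
    rcases Nat.eq_zero_or_pos (r (i + 1) j) with h | h
    · omega
    · have := hself (i + 1) j
      rw [show r (i + 1) j = (r (i + 1) j - 1) + 1 by omega] at this
      have := (hr _ _ _).1 this.drop
      omega
  obtain ⟨z, hz, hzr⟩ := exists_z n r (fun j => by have := (hself 0 j).le; omega) hsym hstep
    (by
      intro i j h
      have s1 := hstep i (j + 1)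
      have s2 := hstep j i
      have s3 := hstep j (i + 1)
      rw [hsym j i, hsym (j + 1) i] at s2
      rw [hsym j (i + 1), hsym (j + 1) (i + 1)] at s3
      by_cases hx : r i (j + 1) = r i j
      · omega
      · have c1 : Ch (Supp d) i (j + 1) (r i j + 1) := (hr _ _ _).2 (by omega)
        have c2 : Ch (Supp d) (i + 1) j (r i j + 1) := (hr _ _ _).2 (by omega)
        have c3 := (hr _ _ _).1 (c1.cross c2 (fun h => by have := (hr _ _ _).1 h; omega))
        omega)
    (by
      intro i
      by_contra hodd
      have h1 := hself i i
      rw [show r i i = 2 * (r i i / 2) + 1 by omega] at h1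
      have := (hr _ _ _).1 (h1.parity hS hd)
      omega)
  refine ⟨z, hz, fun i j _ hi _ hj => ?_⟩
  rw [hzr i j hi hj]
  constructor
  · exact (bridge d c hc i j _ hi hj).2 (hself i j)
  · intro m hm
    exact (hr _ _ _).1 ((bridge d c hc i j m hi hj).1 hm)

end Paper
end

section
/- Let m, n >= 1 and let r be a rank table. There exists w in S^{m,n}_infty with r(i,j) = r_w(i,j) for all (i,j) in [m] x [n] if and only if for every (i,j) in [m] x [n] both of the following hold: (a) r(i,j) - r(i,j-1) is 0 or 1, and r(i,j) - r(i-1,j) is 0 or 1; (b) if r(i-1,j) - r(i-1,j-1) = 1, then r(i,j) - r(i,j-1) = 1. -/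
namespace Paper

theorem aux_rnk_succ (w : Equiv.Perm ℕ) (i j : ℕ) :
    rnk w (i + 1) j = rnk w i j + if 1 ≤ w (i + 1) ∧ w (i + 1) ≤ j then 1 else 0 := by
  unfold rnk
  rw [← Finset.insert_Icc_right_eq_Icc_add_one (by omega), Finset.filter_insert]
  simp only [Finset.mem_Icc]
  split_ifs with h
  · rw [Finset.card_insert_of_notMem]
    simp
  · simp

theorem aux_rnk_inv (w : Equiv.Perm ℕ) (i j : ℕ) : rnk w i j = rnk w⁻¹ j i := by
  unfold rnk
  apply Finset.card_bij (fun a _ => w a)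
  · intro a ha
    simp only [Finset.mem_filter, Finset.mem_Icc] at ha ⊢
    refine ⟨ha.2, ?_⟩
    simpa using ha.1
  · intro a _ b _ h
    exact w.injective h
  · intro b hb
    refine ⟨w⁻¹ b, ?_, by simp⟩
    simp only [Finset.mem_filter, Finset.mem_Icc] at hb ⊢
    refine ⟨hb.2, ?_⟩
    simpa using hb.1

theorem aux_rnk_succ_right (w : Equiv.Perm ℕ) (i j : ℕ) :
    rnk w i (j + 1) = rnk w i j + if 1 ≤ w⁻¹ (j + 1) ∧ w⁻¹ (j + 1) ≤ i then 1 else 0 := by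
  rw [aux_rnk_inv, aux_rnk_inv w i j, aux_rnk_succ]

theorem aux_jump (g h : ℕ → ℕ) (h01 : ∀ j, h j = g j ∨ h j = g j + 1)
    (hmono : ∀ j, h j = g j + 1 → h (j + 1) = g (j + 1) + 1)
    (h0 : h 0 = g 0) (hJ : ∃ J, h J = g J + 1) :
    ∃ v, 1 ≤ v ∧ ∀ j, (v ≤ j → h j = g j + 1) ∧ (j < v → h j = g j) := by
  classical
  refine ⟨Nat.find hJ, ?_, fun j => ⟨fun hj => ?_, fun hj => ?_⟩⟩
  · by_contra hc
    have h1 := Nat.find_spec hJ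
    have h2 : Nat.find hJ = 0 := by omega
    rw [h2] at h1
    omega
  · induction j, hj using Nat.le_induction with
    | base => exact Nat.find_spec hJ
    | succ j _ ih => exact hmono j ih
  · have := Nat.find_min hJ hj
    have := h01 j
    omega

theorem aux_perm (R : ℕ → ℕ → ℕ) (h0 : ∀ i, R i 0 = 0) (h0' : ∀ j, R 0 j = 0)
    (hrow : ∀ i j, R (i + 1) j = R i j ∨ R (i + 1) j = R i j + 1)
    (hcol : ∀ i j, R i (j + 1) = R i j ∨ R i (j + 1) = R i j + 1)
    (hsup : ∀ i j, R (i + 1) j + R i (j + 1) ≤ R (i + 1) (j + 1) + R i j)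
    (hJ : ∀ i, ∃ J, R (i + 1) J = R i J + 1)
    (hJ' : ∀ j, ∃ J, R J (j + 1) = R J j + 1) :
    ∃ w : Equiv.Perm ℕ, w 0 = 0 ∧ w⁻¹ 0 = 0 ∧
      (∀ i, 1 ≤ w (i + 1)) ∧ (∀ i, 1 ≤ w⁻¹ (i + 1)) ∧
      (∀ i j, (w (i + 1) ≤ j → R (i + 1) j = R i j + 1) ∧ (j < w (i + 1) → R (i + 1) j = R i j)) ∧
      (∀ j i, (w⁻¹ (j + 1) ≤ i → R i (j + 1) = R i j + 1) ∧
        (i < w⁻¹ (j + 1) → R i (j + 1) = R i j)) := by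
  have e1 := fun i => aux_jump (R i) (R (i + 1)) (hrow i)
    (fun j h => by have := hsup i j; have := hrow i (j + 1); omega) (by rw [h0, h0]) (hJ i)
  have e2 := fun j => aux_jump (fun i => R i j) (fun i => R i (j + 1)) (fun i => hcol i j)
    (fun i h => by have := hsup i j; have := hcol (i + 1) j; omega)
    (by simp only [h0']) (hJ' j)
  choose W hW1 hW using e1
  choose V hV1 hV using e2
  have k1 : ∀ i, V (W i - 1) = i + 1 := by
    intro i
    have a1 := hW1 i
    obtain ⟨u, hu⟩ : ∃ u, W i = u + 1 := ⟨W i - 1, by omega⟩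
    have b1 := (hW i (u + 1)).1 (by omega)
    have b2 := (hW i u).2 (by omega)
    have c1 := hcol i u
    have c2 := hcol (i + 1) u
    rw [hu, Nat.add_sub_cancel]
    have d1 : ¬ V u ≤ i := fun h => by have := (hV u i).1 h; omega
    have d2 : ¬ i + 1 < V u := fun h => by have := (hV u (i + 1)).2 h; omega
    omega
  have k2 : ∀ j, W (V j - 1) = j + 1 := by
    intro j
    have a1 := hV1 j
    obtain ⟨u, hu⟩ : ∃ u, V j = u + 1 := ⟨V j - 1, by omega⟩
    have b1 := (hV j (u + 1)).1 (by omega)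
    have b2 := (hV j u).2 (by omega)
    have c1 := hrow u j
    have c2 := hrow u (j + 1)
    rw [hu, Nat.add_sub_cancel]
    have d1 : ¬ W u ≤ j := fun h => by have := (hW u j).1 h; omega
    have d2 : ¬ j + 1 < W u := fun h => by have := (hW u (j + 1)).2 h; omega
    omega
  let w : Equiv.Perm ℕ :=
    { toFun := fun i => if i = 0 then 0 else W (i - 1)
      invFun := fun i => if i = 0 then 0 else V (i - 1)
      left_inv := by
        intro i
        rcases Nat.eq_zero_or_pos i with h | h
        · simp [h]
        · have := hW1 (i - 1)
          have := k1 (i - 1)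
          simp only
          rw [if_neg (show i ≠ 0 by omega), if_neg (by omega)]
          omega
      right_inv := by
        intro i
        rcases Nat.eq_zero_or_pos i with h | h
        · simp [h]
        · have := hV1 (i - 1)
          have := k2 (i - 1)
          simp only
          rw [if_neg (show i ≠ 0 by omega), if_neg (by omega)]
          omega }
  have w1 : ∀ i, w (i + 1) = W i := fun i => rfl
  have w2 : ∀ i, w⁻¹ (i + 1) = V i := fun i => rfl
  refine ⟨w, rfl, rfl, ?_, ?_, ?_, ?_⟩
  · intro i; rw [w1]; exact hW1 i
  · intro i; rw [w2]; exact hV1 i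
  · intro i j; rw [w1]; exact hW i j
  · intro j i; rw [w2]; exact hV j i

theorem aux_ext (m n : ℕ) (r : ℕ → ℕ → ℕ)
    (hr0 : ∀ i, r i 0 = 0) (hr0' : ∀ j, r 0 j = 0)
    (H : ∀ i j : ℕ, 1 ≤ i → i ≤ m → 1 ≤ j → j ≤ n →
        (r i j = r i (j - 1) ∨ r i j = r i (j - 1) + 1) ∧
          (r i j = r (i - 1) j ∨ r i j = r (i - 1) j + 1) ∧
          (r (i - 1) j = r (i - 1) (j - 1) + 1 → r i j = r i (j - 1) + 1)) :
    ∃ R : ℕ → ℕ → ℕ, (∀ i j, i ≤ m → j ≤ n → R i j = r i j) ∧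
    (∀ i j, R i j = min (min i j) (r (min i m) (min j n) + (i - m) + (j - n))) ∧
    (∀ i j, R (i + 1) j = R i j ∨ R (i + 1) j = R i j + 1) ∧
    (∀ i j, R i (j + 1) = R i j ∨ R i (j + 1) = R i j + 1) ∧
    (∀ i j, R (i + 1) j + R i (j + 1) ≤ R (i + 1) (j + 1) + R i j) := by
  have hrow : ∀ i j, i + 1 ≤ m → j ≤ n → r (i + 1) j = r i j ∨ r (i + 1) j = r i j + 1 := by
    intro i j hi hj
    rcases Nat.eq_zero_or_pos j with h | h
    · left; rw [h, hr0, hr0]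
    · exact (H (i + 1) j (by omega) hi h hj).2.1
  have hcol : ∀ i j, i ≤ m → j + 1 ≤ n → r i (j + 1) = r i j ∨ r i (j + 1) = r i j + 1 := by
    intro i j hi hj
    rcases Nat.eq_zero_or_pos i with h | h
    · left; rw [h, hr0', hr0']
    · exact (H i (j + 1) h hi (by omega) hj).1
  have hsup : ∀ i j, i + 1 ≤ m → j + 1 ≤ n →
      r (i + 1) j + r i (j + 1) ≤ r (i + 1) (j + 1) + r i j := by
    intro i j hi hj
    have h1 := hcol i j (by omega) hj
    have h2 := hcol (i + 1) j (by omega) hj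
    have h3 := (H (i + 1) (j + 1) (by omega) hi (by omega) hj).2.2
    simp only [Nat.add_sub_cancel] at h3
    omega
  have hi : ∀ i j, i ≤ m → j ≤ n → r i j ≤ i := by
    intro i
    induction i with
    | zero => intro j _ _; rw [hr0']
    | succ i ih =>
      intro j h1 h2
      have := ih j (by omega) h2
      have := hrow i j h1 h2
      omega
  have hj : ∀ i j, i ≤ m → j ≤ n → r i j ≤ j := by
    intro i j
    induction j with
    | zero => intro _ _; rw [hr0]
    | succ j ih =>
      intro h1 h2
      have := ih h1 (by omega)
      have := hcol i j h1 h2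
      omega
  have m1 : ∀ a b : ℕ, a ≤ b → min a b = a := fun a b h => min_eq_left h
  have m2 : ∀ a b : ℕ, b ≤ a → min a b = b := fun a b h => min_eq_right h
  refine ⟨fun i j => min (min i j) (r (min i m) (min j n) + (i - m) + (j - n)),
    ?_, fun _ _ => rfl, ?_, ?_, ?_⟩
  · intro i j h1 h2
    have := hi i j h1 h2
    have := hj i j h1 h2
    simp only
    rw [m1 i m h1, m1 j n h2]
    omega
  · intro i j
    simp only
    have := hi (min i m) (min j n) (by omega) (by omega)
    have := hj (min i m) (min j n) (by omega) (by omega)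
    by_cases h1 : i + 1 ≤ m
    · have := hrow i (min j n) h1 (by omega)
      rw [m1 i m (by omega)] at *
      rw [m1 (i + 1) m h1]
      omega
    · rw [m2 i m (by omega)] at *
      rw [m2 (i + 1) m (by omega)]
      omega
  · intro i j
    simp only
    have := hi (min i m) (min j n) (by omega) (by omega)
    have := hj (min i m) (min j n) (by omega) (by omega)
    by_cases h1 : j + 1 ≤ n
    · have := hcol (min i m) j (by omega) h1
      rw [m1 j n (by omega)] at *
      rw [m1 (j + 1) n h1]
      omega
    · rw [m2 j n (by omega)] at *
      rw [m2 (j + 1) n (by omega)]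
      omega
  · intro i j
    simp only
    by_cases h1 : i + 1 ≤ m <;> by_cases h2 : j + 1 ≤ n
    · rw [m1 i m (by omega), m1 (i + 1) m h1, m1 j n (by omega), m1 (j + 1) n h2]
      have := hi i j (by omega) (by omega)
      have := hj i j (by omega) (by omega)
      have := hi (i + 1) j (by omega) (by omega)
      have := hj (i + 1) j (by omega) (by omega)
      have := hi i (j + 1) (by omega) (by omega)
      have := hj i (j + 1) (by omega) (by omega)
      have := hi (i + 1) (j + 1) (by omega) (by omega)
      have := hj (i + 1) (j + 1) (by omega) (by omega)
      have := hsup i j h1 h2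
      omega
    · rw [m1 i m (by omega), m1 (i + 1) m h1, m2 j n (by omega), m2 (j + 1) n (by omega)]
      have := hi i n (by omega) (by omega)
      have := hj i n (by omega) (by omega)
      have := hi (i + 1) n (by omega) (by omega)
      have := hj (i + 1) n (by omega) (by omega)
      have := hrow i n h1 (by omega)
      omega
    · rw [m2 i m (by omega), m2 (i + 1) m (by omega), m1 j n (by omega), m1 (j + 1) n (by omega)]
      have := hi m j (by omega) (by omega)
      have := hj m j (by omega) (by omega)
      have := hi m (j + 1) (by omega) (by omega)
      have := hj m (j + 1) (by omega) (by omega)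
      have := hcol m j (by omega) h2
      omega
    · rw [m2 i m (by omega), m2 (i + 1) m (by omega), m2 j n (by omega), m2 (j + 1) n (by omega)]
      have := hi m n (by omega) (by omega)
      have := hj m n (by omega) (by omega)
      omega

/-- A rank table `r` agrees on `[m] × [n]` with `r_w` for some
`w ∈ S^{m,n}_∞` iff for every `(i,j) ∈ [m] × [n]`:
(a) `r(i,j) - r(i,j-1)` and `r(i,j) - r(i-1,j)` are each `0` or `1`, and
(b) `r(i-1,j) - r(i-1,j-1) = 1` implies `r(i,j) - r(i,j-1) = 1`. -/
theorem statement12 (m n : ℕ) (hm : 1 ≤ m) (hn : 1 ≤ n) (r : ℕ → ℕ → ℕ)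
    (hr0 : ∀ i, r i 0 = 0) (hr0' : ∀ j, r 0 j = 0) :
    (∃ w ∈ SmnInfty m n,
        ∀ i j : ℕ, 1 ≤ i → i ≤ m → 1 ≤ j → j ≤ n → r i j = rnk w i j) ↔
      ∀ i j : ℕ, 1 ≤ i → i ≤ m → 1 ≤ j → j ≤ n →
        (r i j = r i (j - 1) ∨ r i j = r i (j - 1) + 1) ∧
          (r i j = r (i - 1) j ∨ r i j = r (i - 1) j + 1) ∧
          (r (i - 1) j = r (i - 1) (j - 1) + 1 → r i j = r i (j - 1) + 1) := by
  constructor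
  · rintro ⟨w, -, hw⟩ i j hi him hj hjn
    obtain ⟨i, rfl⟩ : ∃ u, i = u + 1 := ⟨i - 1, by omega⟩
    obtain ⟨j, rfl⟩ : ∃ u, j = u + 1 := ⟨j - 1, by omega⟩
    have hw' : ∀ i j, i ≤ m → j ≤ n → r i j = rnk w i j := by
      intro i j h1 h2
      rcases Nat.eq_zero_or_pos i with h | h
      · subst h; rw [hr0']; simp [rnk]
      rcases Nat.eq_zero_or_pos j with h' | h'
      · subst h'; rw [hr0]; simp [rnk]
      exact hw i j h h1 h' h2
    simp only [Nat.add_sub_cancel]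
    rw [hw' (i + 1) (j + 1) (by omega) (by omega), hw' (i + 1) j (by omega) (by omega),
      hw' i (j + 1) (by omega) (by omega), hw' i j (by omega) (by omega)]
    have h1 := aux_rnk_succ w i (j + 1)
    have h2 := aux_rnk_succ_right w (i + 1) j
    have h3 := aux_rnk_succ_right w i j
    refine ⟨?_, ?_, ?_⟩
    · split_ifs at h2 <;> omega
    · split_ifs at h1 <;> omega
    · intro h
      split_ifs at h2 h3 <;> omega
  · intro H
    obtain ⟨R, hRr, hR, hrow, hcol, hsup⟩ := aux_ext m n r hr0 hr0' H
    have hR0 : ∀ i, R i 0 = 0 := by intro i; rw [hR]; simp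
    have hR0' : ∀ j, R 0 j = 0 := by intro i; rw [hR]; simp
    have hbig : ∀ i j, i + n ≤ j → R i j = i := by
      intro i j h
      rw [hR]
      omega
    have hbig' : ∀ i j, j + m ≤ i → R i j = j := by
      intro i j h
      rw [hR]
      omega
    have hmin : ∀ i j, m + n ≤ i → R i j = min i j := by
      intro i j h
      rw [hR]
      omega
    obtain ⟨w, w0, w0', wp, wp', hw, hw'⟩ := aux_perm R hR0 hR0' hrow hcol hsup
      (fun i => ⟨i + 1 + n, by rw [hbig _ _ (by omega), hbig _ _ (by omega)]⟩)
      (fun j => ⟨j + 1 + m, by rw [hbig' _ _ (by omega), hbig' _ _ (by omega)]⟩)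
    refine ⟨w, ⟨⟨w0, ?_⟩, ?_, ?_⟩, ?_⟩
    · apply (Set.finite_Iic (m + n)).subset
      intro i hi
      simp only [Set.mem_setOf_eq, Set.mem_Iic] at hi ⊢
      by_contra hc
      obtain ⟨i, rfl⟩ : ∃ u, i = u + 1 := ⟨i - 1, by omega⟩
      have h1 := (hw i (i + 1)).2
      have h2 := (hw i i).1
      rw [hmin _ _ (by omega), hmin _ _ (by omega)] at h1 h2
      omega
    · rintro i ⟨h1, h2⟩
      refine ⟨h1, ?_⟩
      by_contra hc
      obtain ⟨i, rfl⟩ : ∃ u, i = u + 1 := ⟨i - 1, by omega⟩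
      have a1 := (hw (i + 1) (w (i + 1 + 1))).1 le_rfl
      have a2 := (hw i (w (i + 1 + 1))).2 h2
      generalize w (i + 1 + 1) = j at *
      rw [hR, hR] at a1 a2
      rw [min_eq_right (show m ≤ i by omega), min_eq_right (show m ≤ i + 1 by omega)] at a2
      rw [min_eq_right (show m ≤ i + 1 + 1 by omega), min_eq_right (show m ≤ i + 1 by omega)] at a1
      omega
    · rintro i ⟨h1, h2⟩
      refine ⟨h1, ?_⟩
      by_contra hc
      obtain ⟨i, rfl⟩ : ∃ u, i = u + 1 := ⟨i - 1, by omega⟩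
      have a1 := (hw' (i + 1) (w⁻¹ (i + 1 + 1))).1 le_rfl
      have a2 := (hw' i (w⁻¹ (i + 1 + 1))).2 h2
      generalize w⁻¹ (i + 1 + 1) = j at *
      rw [hR, hR] at a1 a2
      rw [min_eq_right (show n ≤ i by omega), min_eq_right (show n ≤ i + 1 by omega)] at a2
      rw [min_eq_right (show n ≤ i + 1 + 1 by omega), min_eq_right (show n ≤ i + 1 by omega)] at a1
      omega
    · have key : ∀ i j, R i j = rnk w i j := by
        intro i j
        induction i with
        | zero => rw [hR0']; simp [rnk]
        | succ i ih =>
          rw [aux_rnk_succ, ← ih]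
          have h1 := hw i j
          have h2 := wp i
          split_ifs with h
          · exact h1.1 h.2
          · exact h1.2 (by omega)
      intro i j _ him _ hjn
      rw [← hRr i j him hjn, key]

end Paper
end
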